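/- arXiv:1402.4690 — 15 statements merged into one kernel-verified Lean document; each statement's English description precedes it below -/
import Mathlib

section
/- Let Ω ⊆ ℝⁿ be nonempty, m : ℝⁿ → ℝᵏ and H : ℝⁿ → ℝ, and let I = [0,1]. Define the obstacle R(x) = sup { H(y) : y ∈ Ω, m(y) = x } for x ∈ m(Ω). Suppose the image m(Ω) is a convex set and R is real-valued and concave on m(Ω). Then the Bellman function B(x) = sup { ⟨H∘φ⟩_I : φ simple valued in Ω, ⟨m∘φ⟩_I = x } satisfies B(x) = R(x) for all x ∈ m(Ω). -/
open MeasureTheory Set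

lemma integral_comp_simple {n : ℕ} {E : Type*} [NormedAddCommGroup E] [NormedSpace ℝ E]
    [CompleteSpace E]
    (φ : ℝ → (Fin n → ℝ)) (hφ : Measurable φ) (hf : (Set.range φ).Finite)
    (μ : Measure ℝ) [IsProbabilityMeasure μ] (g : (Fin n → ℝ) → E) :
    ∫ t, g (φ t) ∂μ = ∑ y ∈ hf.toFinset, μ.real (φ ⁻¹' {y}) • g y := by
  classical
  have h : ∀ t, g (φ t) = ∑ y ∈ hf.toFinset, (φ ⁻¹' {y}).indicator (fun _ => g y) t := by
    intro t
    rw [Finset.sum_eq_single (φ t)]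
    · simp
    · intro b _ hb
      apply Set.indicator_of_notMem
      intro h
      exact hb h.symm
    · intro h
      simp at h
  have hm : ∀ y, MeasurableSet (φ ⁻¹' {y}) := fun y => hφ (measurableSet_singleton y)
  simp_rw [h]
  rw [integral_finsetSum]
  · refine Finset.sum_congr rfl fun y _ => ?_
    exact integral_indicator_const _ (hm y)
  · intro y _
    exact (integrable_const _).indicator (hm y)

/-- If the image `m(Ω)` is convex and the obstacle `R(x) = sup {H y : y ∈ Ω, m y = x}`
is real-valued and concave on `m(Ω)`, then the Bellman function coincides with the
obstacle on `m(Ω)`. -/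
theorem bellman_eq_obstacle {n k : ℕ} (Ω : Set (Fin n → ℝ)) (hΩ : Ω.Nonempty)
    (m : (Fin n → ℝ) → (Fin k → ℝ)) (H : (Fin n → ℝ) → ℝ)
    (R : (Fin k → ℝ) → ℝ)
    (hR : ∀ x, R x = sSup {r : ℝ | ∃ y ∈ Ω, m y = x ∧ H y = r})
    (hconv : Convex ℝ (m '' Ω))
    (hRbdd : ∀ x ∈ m '' Ω, BddAbove {r : ℝ | ∃ y ∈ Ω, m y = x ∧ H y = r})
    (hRconc : ConcaveOn ℝ (m '' Ω) R) :
    ∀ x ∈ m '' Ω,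
      sSup {r : ℝ | ∃ φ : ℝ → (Fin n → ℝ), Measurable φ ∧ (Set.range φ).Finite ∧
          (∀ t, φ t ∈ Ω) ∧ (∫ t in Icc (0:ℝ) 1, m (φ t)) = x ∧
          (∫ t in Icc (0:ℝ) 1, H (φ t)) = r} = R x := by
  rintro x ⟨y₀, hy₀, hx⟩
  have hprob : IsProbabilityMeasure (volume.restrict (Icc (0:ℝ) 1)) := ⟨by simp⟩
  have hle : ∀ y ∈ Ω, H y ≤ R (m y) := fun y hy => by
    rw [hR]
    exact le_csSup (hRbdd _ ⟨y, hy, rfl⟩) ⟨y, hy, rfl, rfl⟩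
  have hub : ∀ r ∈ {r : ℝ | ∃ φ : ℝ → (Fin n → ℝ), Measurable φ ∧ (Set.range φ).Finite ∧
          (∀ t, φ t ∈ Ω) ∧ (∫ t in Icc (0:ℝ) 1, m (φ t)) = x ∧
          (∫ t in Icc (0:ℝ) 1, H (φ t)) = r}, r ≤ R x := by
    rintro r ⟨φ, hφ, hf, hφΩ, h1, h2⟩
    have hone := integral_comp_simple φ hφ hf (volume.restrict (Icc (0:ℝ) 1)) (fun _ => (1:ℝ))
    rw [integral_comp_simple φ hφ hf] at h1 h2
    have hmem : ∀ y ∈ hf.toFinset, y ∈ Ω := by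
      intro y hy
      obtain ⟨t, rfl⟩ := hf.mem_toFinset.1 hy
      exact hφΩ t
    have hJ := hRconc.le_map_sum (t := hf.toFinset)
      (w := fun y => (volume.restrict (Icc (0:ℝ) 1)).real (φ ⁻¹' {y})) (p := m)
      (fun _ _ => measureReal_nonneg) (by simpa using hone.symm)
      (fun y hy => ⟨y, hmem y hy, rfl⟩)
    rw [h1] at hJ
    rw [← h2]
    refine le_trans (Finset.sum_le_sum fun y hy => ?_) hJ
    exact mul_le_mul_of_nonneg_left (hle y (hmem y hy)) measureReal_nonneg
  have hin : ∀ y ∈ Ω, m y = x → H y ∈ {r : ℝ | ∃ φ : ℝ → (Fin n → ℝ), Measurable φ ∧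
          (Set.range φ).Finite ∧
          (∀ t, φ t ∈ Ω) ∧ (∫ t in Icc (0:ℝ) 1, m (φ t)) = x ∧
          (∫ t in Icc (0:ℝ) 1, H (φ t)) = r} := by
    intro y hy hyx
    refine ⟨fun _ => y, measurable_const, Set.finite_range_const, fun _ => hy, ?_, ?_⟩
    · rw [integral_const]
      simp [hyx]
    · rw [integral_const]
      simp
  apply le_antisymm
  · exact csSup_le ⟨_, hin y₀ hy₀ hx⟩ hub
  · rw [hR x]
    refine csSup_le ⟨H y₀, y₀, hy₀, hx, rfl⟩ ?_
    rintro r ⟨y, hy, hyx, rfl⟩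
    exact le_csSup ⟨R x, hub⟩ (hin y hy hyx)
end

section
/- Let p ≥ 1 be a real number and define m : ℝ² → ℝ³ by m(x,y) = (|x|^p, |y|^p, |x−y|^p). Then the convex hull of the image m(ℝ²) equals the set Λ = { (x₁,x₂,x₃) ∈ ℝ³ : x₁, x₂, x₃ ≥ 0, x₁^{1/p} + x₂^{1/p} ≥ x₃^{1/p}, x₂^{1/p} + x₃^{1/p} ≥ x₁^{1/p}, x₃^{1/p} + x₁^{1/p} ≥ x₂^{1/p} }. -/
lemma aux_add (p : ℝ) (hp : 1 ≤ p) (a b c a' b' c' : ℝ) (ha : 0 ≤ a) (hb : 0 ≤ b) (hc : 0 ≤ c)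
    (ha' : 0 ≤ a') (hb' : 0 ≤ b') (hc' : 0 ≤ c')
    (h : c ^ (1/p) ≤ a ^ (1/p) + b ^ (1/p)) (h' : c' ^ (1/p) ≤ a' ^ (1/p) + b' ^ (1/p)) :
    (c + c') ^ (1/p) ≤ (a + a') ^ (1/p) + (b + b') ^ (1/p) := by
  have hp0 : p ≠ 0 := by linarith
  have key : ∀ x : ℝ, 0 ≤ x → (x ^ (1/p)) ^ p = x := fun x hx => by
    rw [one_div, Real.rpow_inv_rpow hx hp0]
  have le : ∀ x y : ℝ, 0 ≤ x → x ^ (1/p) ≤ y → x ≤ y ^ p := fun x y hx hxy => by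
    rw [← key x hx]
    exact Real.rpow_le_rpow (by positivity) hxy (by linarith)
  have M := Real.Lp_add_le_of_nonneg (s := (Finset.univ : Finset (Fin 2)))
    (f := ![a ^ (1/p), a' ^ (1/p)]) (g := ![b ^ (1/p), b' ^ (1/p)]) (p := p) hp
    (by intro i _; fin_cases i <;> simp <;> positivity)
    (by intro i _; fin_cases i <;> simp <;> positivity)
  simp only [Fin.sum_univ_two, Matrix.cons_val_zero, Matrix.cons_val_one] at M
  rw [key a ha, key b hb, key a' ha', key b' hb'] at M
  refine le_trans ?_ M
  exact Real.rpow_le_rpow (by positivity) (add_le_add (le _ _ hc h) (le _ _ hc' h'))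
    (by positivity)

lemma aux_comb (p : ℝ) (hp : 1 ≤ p) (s t : ℝ) (hs : 0 ≤ s) (ht : 0 ≤ t)
    (a b c a' b' c' : ℝ) (ha : 0 ≤ a) (hb : 0 ≤ b) (hc : 0 ≤ c)
    (ha' : 0 ≤ a') (hb' : 0 ≤ b') (hc' : 0 ≤ c')
    (h : c ^ (1/p) ≤ a ^ (1/p) + b ^ (1/p)) (h' : c' ^ (1/p) ≤ a' ^ (1/p) + b' ^ (1/p)) :
    (s * c + t * c') ^ (1/p) ≤ (s * a + t * a') ^ (1/p) + (s * b + t * b') ^ (1/p) := by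
  apply aux_add p hp <;> try positivity
  · rw [Real.mul_rpow hs hc, Real.mul_rpow hs ha, Real.mul_rpow hs hb, ← mul_add]
    exact mul_le_mul_of_nonneg_left h (by positivity)
  · rw [Real.mul_rpow ht hc', Real.mul_rpow ht ha', Real.mul_rpow ht hb', ← mul_add]
    exact mul_le_mul_of_nonneg_left h' (by positivity)

/-- For `p ≥ 1` and `m(x,y) = (|x|^p, |y|^p, |x−y|^p)`, the convex hull of the image
`m(ℝ²)` is the cone `Λ` of nonnegative triples whose `p`-th roots satisfy the three
triangle inequalities. -/
theorem convexHull_image_eq_cone (p : ℝ) (hp : 1 ≤ p) :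
    convexHull ℝ (Set.range (fun v : ℝ × ℝ => (|v.1| ^ p, |v.2| ^ p, |v.1 - v.2| ^ p)))
      = {x : ℝ × ℝ × ℝ | 0 ≤ x.1 ∧ 0 ≤ x.2.1 ∧ 0 ≤ x.2.2 ∧
          x.2.2 ^ (1/p) ≤ x.1 ^ (1/p) + x.2.1 ^ (1/p) ∧
          x.1 ^ (1/p) ≤ x.2.1 ^ (1/p) + x.2.2 ^ (1/p) ∧
          x.2.1 ^ (1/p) ≤ x.2.2 ^ (1/p) + x.1 ^ (1/p)} := by
  have hp0 : p ≠ 0 := by linarith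
  have hpp : 0 ≤ p := by linarith
  apply Set.Subset.antisymm
  · apply convexHull_min
    · rintro _ ⟨⟨x, y⟩, rfl⟩
      have key : ∀ z : ℝ, (|z| ^ p) ^ (1/p) = |z| := fun z => by
        rw [one_div, Real.rpow_rpow_inv (abs_nonneg z) hp0]
      simp only [Set.mem_ofPred_eq, key]
      refine ⟨by positivity, by positivity, by positivity, abs_sub x y, ?_, ?_⟩
      · have := abs_add_le y (x - y)
        simpa using this
      · have := abs_add_le (y - x) x
        rw [abs_sub_comm y x] at this
        simpa using this
    · rintro ⟨a, b, c⟩ ⟨ha, hb, hc, h1, h2, h3⟩ ⟨a', b', c'⟩ ⟨ha', hb', hc', h1', h2', h3'⟩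
        s t hs ht _
      simp only at ha hb hc h1 h2 h3 ha' hb' hc' h1' h2' h3'
      simp only [Set.mem_ofPred_eq, Prod.smul_mk, Prod.mk_add_mk, smul_eq_mul]
      refine ⟨by positivity, by positivity, by positivity, ?_, ?_, ?_⟩
      · exact aux_comb p hp s t hs ht a b c a' b' c' ha hb hc ha' hb' hc' h1 h1'
      · exact aux_comb p hp s t hs ht b c a b' c' a' hb hc ha hb' hc' ha' h2 h2'
      · exact aux_comb p hp s t hs ht c a b c' a' b' hc ha hb hc' ha' hb' h3 h3'
  · rintro ⟨a, b, c⟩ ⟨ha, hb, hc, h1, h2, h3⟩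
    simp only at ha hb hc h1 h2 h3
    have key : ∀ x : ℝ, 0 ≤ x → (x ^ (1/p)) ^ p = x := fun x hx => by
      rw [one_div, Real.rpow_inv_rpow hx hp0]
    have kA := key a ha
    have kB := key b hb
    have kC := key c hc
    have hA : 0 ≤ a ^ (1/p) := by positivity
    have hB : 0 ≤ b ^ (1/p) := by positivity
    have hC : 0 ≤ c ^ (1/p) := by positivity
    generalize a ^ (1/p) = A at *
    generalize b ^ (1/p) = B at *
    generalize c ^ (1/p) = C at *
    have lo : |A - B| ^ p ≤ c := by
      rw [← kC]
      exact Real.rpow_le_rpow (abs_nonneg _) (abs_le.2 ⟨by linarith, by linarith⟩) hpp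
    have hi : c ≤ |A - -B| ^ p := by
      rw [← kC]
      refine Real.rpow_le_rpow hC ?_ hpp
      rw [sub_neg_eq_add, abs_of_nonneg (by linarith)]
      exact h1
    have hmem : c ∈ segment ℝ (|A - B| ^ p) (|A - -B| ^ p) := by
      rw [segment_eq_Icc (lo.trans hi)]
      exact ⟨lo, hi⟩
    obtain ⟨s, t, hs, ht, hst, hc'⟩ := hmem
    refine segment_subset_convexHull (Set.mem_range_self (A, B)) (Set.mem_range_self (A, -B))
      ⟨s, t, hs, ht, hst, ?_⟩
    simp only [smul_eq_mul] at hc'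
    simp only [Prod.smul_mk, Prod.mk_add_mk, smul_eq_mul, hc', abs_neg, abs_of_nonneg hA,
      abs_of_nonneg hB, kA, kB, ← add_mul, hst, one_mul]
end

section
/- Let p ≥ 1 be a real number and define m : ℝ² → ℝ³ by m(x,y) = (|x|^p, |y|^p, |x−y|^p). Then a triple (x₁,x₂,x₃) ∈ ℝ³ lies in the image m(ℝ²) if and only if x₁, x₂, x₃ ≥ 0 and at least one of the following equalities holds: x₁^{1/p} + x₂^{1/p} = x₃^{1/p}, or x₂^{1/p} + x₃^{1/p} = x₁^{1/p}, or x₃^{1/p} + x₁^{1/p} = x₂^{1/p}. In other words, m(ℝ²) is exactly the boundary ∂Λ of the cone Λ = { (x₁,x₂,x₃) : xᵢ ≥ 0 and the three triangle inequalities x_i^{1/p} + x_j^{1/p} ≥ x_k^{1/p} hold }. -/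
/-- For `p ≥ 1` and `m(x,y) = (|x|^p, |y|^p, |x−y|^p)`, a triple lies in the image
`m(ℝ²)` iff it is nonnegative and one of the three triangle inequalities on the `p`-th
roots holds with equality; i.e. `m(ℝ²)` is the boundary `∂Λ` of the cone `Λ`. -/
theorem range_eq_boundary_cone (p : ℝ) (hp : 1 ≤ p) :
    Set.range (fun v : ℝ × ℝ => (|v.1| ^ p, |v.2| ^ p, |v.1 - v.2| ^ p))
      = {x : ℝ × ℝ × ℝ | 0 ≤ x.1 ∧ 0 ≤ x.2.1 ∧ 0 ≤ x.2.2 ∧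
          (x.1 ^ (1/p) + x.2.1 ^ (1/p) = x.2.2 ^ (1/p) ∨
           x.2.1 ^ (1/p) + x.2.2 ^ (1/p) = x.1 ^ (1/p) ∨
           x.2.2 ^ (1/p) + x.1 ^ (1/p) = x.2.1 ^ (1/p))} := by
  have hp0 : p ≠ 0 := by linarith
  have h1 : ∀ t : ℝ, (|t| ^ p) ^ (1/p) = |t| := fun t => by
    rw [one_div, Real.rpow_rpow_inv (abs_nonneg t) hp0]
  have h2 : ∀ t : ℝ, 0 ≤ t → (t ^ (1/p)) ^ p = t := fun t ht => by
    rw [one_div, Real.rpow_inv_rpow ht hp0]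
  ext ⟨x, y, z⟩
  simp only [Set.mem_range, Set.mem_setOf_eq, Prod.mk.injEq, Prod.exists]
  constructor
  · rintro ⟨a, b, rfl, rfl, rfl⟩
    refine ⟨by positivity, by positivity, by positivity, ?_⟩
    simp only [h1]
    rcases abs_cases a with ⟨ha, _⟩ | ⟨ha, _⟩ <;> rcases abs_cases b with ⟨hb, _⟩ | ⟨hb, _⟩ <;>
      rcases abs_cases (a - b) with ⟨hc, _⟩ | ⟨hc, _⟩ <;> rw [ha, hb, hc] <;>
      first
        | (left; linarith)
        | (right; left; linarith)
        | (right; right; linarith)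
  · rintro ⟨hx, hy, hz, h⟩
    have ex := h2 x hx
    have ey := h2 y hy
    have ez := h2 z hz
    have nx : 0 ≤ x ^ (1/p) := by positivity
    have ny : 0 ≤ y ^ (1/p) := by positivity
    have nz : 0 ≤ z ^ (1/p) := by positivity
    generalize x ^ (1/p) = a at *
    generalize y ^ (1/p) = b at *
    generalize z ^ (1/p) = c at *
    rcases h with h | h | h
    · refine ⟨a, -b, ?_, ?_, ?_⟩
      · rw [abs_of_nonneg nx, ex]
      · rw [abs_neg, abs_of_nonneg ny, ey]
      · rw [sub_neg_eq_add, h, abs_of_nonneg nz, ez]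
    · refine ⟨a, b, ?_, ?_, ?_⟩
      · rw [abs_of_nonneg nx, ex]
      · rw [abs_of_nonneg ny, ey]
      · rw [show a - b = c by linarith, abs_of_nonneg nz, ez]
    · refine ⟨a, b, ?_, ?_, ?_⟩
      · rw [abs_of_nonneg nx, ex]
      · rw [abs_of_nonneg ny, ey]
      · rw [show a - b = -c by linarith, abs_neg, abs_of_nonneg nz, ez]
end

section
/- Let p ∈ (1,∞) and let a, b ≥ 0. If f, g : [0,1] → ℝ are measurable functions with ∫₀¹ |f|^p = a^p, ∫₀¹ |g|^p = b^p, and ∫₀¹ |f−g|^p = (a+b)^p, then ∫₀¹ |(f+g)/2|^p = |a−b|^p / 2^p. -/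
open MeasureTheory Set

theorem abs_rpow_aux (p l m u v : ℝ) (hp : 1 < p) (hl : 0 < l) (hm : 0 < m) (h1 : l + m = 1) :
    |l * u + m * v| ^ p ≤ l * |u| ^ p + m * |v| ^ p ∧
    (|l * u + m * v| ^ p = l * |u| ^ p + m * |v| ^ p → u = v) := by
  have hp0 : 0 < p := by linarith
  have htri : |l * u + m * v| ≤ l * |u| + m * |v| := by
    calc |l * u + m * v| ≤ |l * u| + |m * v| := abs_add_le _ _
      _ = _ := by rw [abs_mul, abs_mul, abs_of_pos hl, abs_of_pos hm]
  have h2 : |l * u + m * v| ^ p ≤ (l * |u| + m * |v|) ^ p :=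
    Real.rpow_le_rpow (abs_nonneg _) htri hp0.le
  have h3 : (l * |u| + m * |v|) ^ p ≤ l * |u| ^ p + m * |v| ^ p := by
    have := (strictConvexOn_rpow hp).convexOn.2 (mem_Ici.2 (abs_nonneg u))
      (mem_Ici.2 (abs_nonneg v)) hl.le hm.le h1
    simpa using this
  refine ⟨h2.trans h3, fun he => ?_⟩
  have huv : |u| = |v| := by
    by_contra hne
    have := (strictConvexOn_rpow hp).2 (mem_Ici.2 (abs_nonneg u))
      (mem_Ici.2 (abs_nonneg v)) hne hl hm h1
    simp only [smul_eq_mul] at this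
    linarith
  have h4 : |l * u + m * v| = l * |u| + m * |v| := by
    apply le_antisymm htri
    by_contra hlt
    have := Real.rpow_lt_rpow (abs_nonneg _) (not_le.1 hlt) hp0
    linarith
  rcases abs_eq_abs.1 huv with h | h
  · exact h
  · subst h
    have h5 : |v| = |m - l| * |v| := by
      rw [← abs_mul]
      rw [abs_neg, ← add_mul, h1, one_mul] at h4
      rw [← h4]; congr 1; ring
    have h6 : |m - l| < 1 := by rw [abs_lt]; constructor <;> linarith
    have h7 : v = 0 := by
      by_contra hv
      have := abs_pos.2 hv
      nlinarith
    simp [h7]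

theorem ae_zero_aux (p : ℝ) (hp1 : 1 < p) (f : ℝ → ℝ)
    (hfi : IntegrableOn (fun t => |f t| ^ p) (Icc 0 1))
    (hf : (∫ t in Icc (0:ℝ) 1, |f t| ^ p) = 0) :
    ∀ᵐ t ∂(volume.restrict (Icc (0:ℝ) 1)), f t = 0 := by
  have := (integral_eq_zero_iff_of_nonneg (fun t => by positivity) hfi).1 hf
  filter_upwards [this] with t ht
  have ht : |f t| ^ p = 0 := ht
  rw [Real.rpow_eq_zero (abs_nonneg _) (by linarith)] at ht
  simpa using ht

/-- Boundary condition on the face `x₁^{1/p} + x₂^{1/p} = x₃^{1/p}`: if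
`∫|f|^p = a^p`, `∫|g|^p = b^p` and `∫|f−g|^p = (a+b)^p`, then
`∫|(f+g)/2|^p = |a−b|^p / 2^p`. -/
theorem boundary_face_one (p a b : ℝ) (hp1 : 1 < p) (ha : 0 ≤ a) (hb : 0 ≤ b)
    (f g : ℝ → ℝ) (hfm : Measurable f) (hgm : Measurable g)
    (hfi : IntegrableOn (fun t => |f t| ^ p) (Icc 0 1))
    (hgi : IntegrableOn (fun t => |g t| ^ p) (Icc 0 1))
    (hf : (∫ t in Icc (0:ℝ) 1, |f t| ^ p) = a ^ p)
    (hg : (∫ t in Icc (0:ℝ) 1, |g t| ^ p) = b ^ p)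
    (hfg : (∫ t in Icc (0:ℝ) 1, |f t - g t| ^ p) = (a + b) ^ p) :
    (∫ t in Icc (0:ℝ) 1, |(f t + g t) / 2| ^ p) = |a - b| ^ p / 2 ^ p := by
  have hp0 : p ≠ 0 := by linarith
  rcases ha.eq_or_lt with rfl | ha
  · rw [Real.zero_rpow hp0] at hf
    have h0 := ae_zero_aux p hp1 f hfi hf
    have : (∫ t in Icc (0:ℝ) 1, |(f t + g t) / 2| ^ p)
        = ∫ t in Icc (0:ℝ) 1, |g t| ^ p / 2 ^ p := by
      apply integral_congr_ae
      filter_upwards [h0] with t ht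
      rw [ht, zero_add, abs_div, Real.div_rpow (abs_nonneg _) (abs_nonneg _), abs_two]
    rw [this, integral_div, hg, zero_sub, abs_neg, abs_of_nonneg hb]
  have key : ∀ᵐ t ∂(volume.restrict (Icc (0:ℝ) 1)), g t = -(b / a) * f t := by
    rcases hb.eq_or_lt with rfl | hb
    · rw [Real.zero_rpow hp0] at hg
      filter_upwards [ae_zero_aux p hp1 g hgi hg] with t ht
      simp [ht]
    have hab : 0 < a + b := by linarith
    have hl : 0 < a / (a + b) := by positivity
    have hm : 0 < b / (a + b) := by positivity
    have h1 : a / (a + b) + b / (a + b) = 1 := by field_simp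
    have hx := fun t => abs_rpow_aux p _ _ (f t / a) (-(g t) / b) hp1 hl hm h1
    have e1 : ∀ t, |a / (a + b) * (f t / a) + b / (a + b) * (-(g t) / b)| ^ p
        = |f t - g t| ^ p / (a + b) ^ p := by
      intro t
      rw [← Real.div_rpow (abs_nonneg _) hab.le]
      congr 1
      rw [← abs_of_pos hab, ← abs_div, abs_of_pos hab]
      congr 1
      field_simp
      ring
    have e2 : ∀ t, |f t / a| ^ p = |f t| ^ p / a ^ p := by
      intro t
      rw [abs_div, abs_of_pos ha, Real.div_rpow (abs_nonneg _) ha.le]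
    have e3 : ∀ t, |-(g t) / b| ^ p = |g t| ^ p / b ^ p := by
      intro t
      rw [abs_div, abs_neg, abs_of_pos hb, Real.div_rpow (abs_nonneg _) hb.le]
    simp only [e1, e2, e3] at hx
    have i1 : Integrable (fun t => a / (a + b) * (|f t| ^ p / a ^ p))
        (volume.restrict (Icc (0:ℝ) 1)) := (hfi.div_const _).const_mul _
    have i2 : Integrable (fun t => b / (a + b) * (|g t| ^ p / b ^ p))
        (volume.restrict (Icc (0:ℝ) 1)) := (hgi.div_const _).const_mul _
    have i12 : Integrable (fun t => a / (a + b) * (|f t| ^ p / a ^ p)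
        + b / (a + b) * (|g t| ^ p / b ^ p)) (volume.restrict (Icc (0:ℝ) 1)) := i1.add i2
    have i3 : Integrable (fun t => |f t - g t| ^ p / (a + b) ^ p)
        (volume.restrict (Icc (0:ℝ) 1)) := by
      refine i12.mono' (Measurable.aestronglyMeasurable (by fun_prop)) (Filter.Eventually.of_forall fun t => ?_)
      rw [Real.norm_of_nonneg (by positivity)]
      exact (hx t).1
    have hpa : a ^ p ≠ 0 := by positivity
    have hpb : b ^ p ≠ 0 := by positivity
    have hpab : (a + b) ^ p ≠ 0 := by positivity
    have hz : ∫ t in Icc (0:ℝ) 1, ((a / (a + b) * (|f t| ^ p / a ^ p)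
        + b / (a + b) * (|g t| ^ p / b ^ p)) - |f t - g t| ^ p / (a + b) ^ p) = 0 := by
      rw [integral_sub i12 i3, integral_add i1 i2, integral_const_mul, integral_const_mul,
        integral_div, integral_div, integral_div, hf, hg, hfg, div_self hpa, div_self hpb,
        div_self hpab]
      linarith
    have hae := (integral_eq_zero_iff_of_nonneg
      (fun t => sub_nonneg.2 (hx t).1) (i12.sub i3)).1 hz
    filter_upwards [hae] with t ht
    have ht' := (hx t).2 (sub_eq_zero.1 ht).symm
    field_simp at ht' ⊢
    linarith
  have : (∫ t in Icc (0:ℝ) 1, |(f t + g t) / 2| ^ p)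
      = ∫ t in Icc (0:ℝ) 1, |a - b| ^ p / 2 ^ p / a ^ p * |f t| ^ p := by
    apply integral_congr_ae
    filter_upwards [key] with t ht
    have : (f t + g t) / 2 = (a - b) / 2 / a * f t := by rw [ht]; field_simp; ring
    rw [this, abs_mul, abs_div, abs_div, abs_two, abs_of_pos ha,
      Real.mul_rpow (by positivity) (by positivity), Real.div_rpow (by positivity) ha.le,
      Real.div_rpow (by positivity) (by positivity)]
  rw [this, integral_const_mul, hf]
  have hpa : a ^ p ≠ 0 := by positivity
  field_simp
end

section
/- Let p ∈ (1,∞) and let b, c ≥ 0. If f, g : [0,1] → ℝ are measurable functions with ∫₀¹ |f|^p = (b+c)^p, ∫₀¹ |g|^p = b^p, and ∫₀¹ |f−g|^p = c^p, then ∫₀¹ |(f+g)/2|^p = (b + c/2)^p. -/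
open MeasureTheory Set

theorem aux_norm (p : ℝ) (hp1 : 1 < p) (μ : Measure ℝ) (a : ℝ) (ha : 0 ≤ a) (u : ℝ → ℝ)
    (hu : MemLp u (ENNReal.ofReal p) μ) (h : (∫ t, |u t| ^ p ∂μ) = a ^ p) :
    (eLpNorm u (ENNReal.ofReal p) μ).toReal = a := by
  have hp0 : 0 < p := by linarith
  rw [hu.eLpNorm_eq_integral_rpow_norm (by simpa using hp0) ENNReal.ofReal_ne_top]
  simp only [ENNReal.toReal_ofReal hp0.le, Real.norm_eq_abs]
  rw [h, Real.rpow_rpow_inv ha hp0.ne', ENNReal.toReal_ofReal ha]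

theorem aux_tri (q : ENNReal) (hq : 1 ≤ q) (μ : Measure ℝ) (u v : ℝ → ℝ)
    (hu : MemLp u q μ) (hv : MemLp v q μ) :
    (eLpNorm (u + v) q μ).toReal ≤ (eLpNorm u q μ).toReal + (eLpNorm v q μ).toReal := by
  rw [← ENNReal.toReal_add hu.eLpNorm_ne_top hv.eLpNorm_ne_top]
  exact ENNReal.toReal_mono (ENNReal.add_ne_top.2 ⟨hu.eLpNorm_ne_top, hv.eLpNorm_ne_top⟩)
    (eLpNorm_add_le hu.1 hv.1 hq)

/-- Boundary condition on the face `x₂^{1/p} + x₃^{1/p} = x₁^{1/p}`: if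
`∫|f|^p = (b+c)^p`, `∫|g|^p = b^p` and `∫|f−g|^p = c^p`, then
`∫|(f+g)/2|^p = (b + c/2)^p`. -/
theorem boundary_face_two (p b c : ℝ) (hp1 : 1 < p) (hb : 0 ≤ b) (hc : 0 ≤ c)
    (f g : ℝ → ℝ) (hfm : Measurable f) (hgm : Measurable g)
    (hfi : IntegrableOn (fun t => |f t| ^ p) (Icc 0 1))
    (hgi : IntegrableOn (fun t => |g t| ^ p) (Icc 0 1))
    (hf : (∫ t in Icc (0:ℝ) 1, |f t| ^ p) = (b + c) ^ p)
    (hg : (∫ t in Icc (0:ℝ) 1, |g t| ^ p) = b ^ p)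
    (hfg : (∫ t in Icc (0:ℝ) 1, |f t - g t| ^ p) = c ^ p) :
    (∫ t in Icc (0:ℝ) 1, |(f t + g t) / 2| ^ p) = (b + c / 2) ^ p := by
  have hp0 : 0 < p := by linarith
  set μ := (volume : Measure ℝ).restrict (Icc 0 1) with hμ
  set q := ENNReal.ofReal p with hq
  have hq1 : 1 ≤ q := by rw [hq]; simpa using hp1.le
  have hq0 : q ≠ 0 := by rw [hq]; simpa using hp0
  have hqt : q ≠ ⊤ := ENNReal.ofReal_ne_top
  have hqr : q.toReal = p := ENNReal.toReal_ofReal hp0.le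
  have mem : ∀ u : ℝ → ℝ, Measurable u → Integrable (fun t => |u t| ^ p) μ → MemLp u q μ := by
    intro u hu hi
    rw [← integrable_norm_rpow_iff hu.aestronglyMeasurable hq0 hqt, hqr]
    simpa only [Real.norm_eq_abs] using hi
  have mf := mem f hfm hfi
  have mg := mem g hgm hgi
  have mh : MemLp (f - g) q μ := mf.sub mg
  have mk : MemLp ((1 / 2 : ℝ) • (f - g)) q μ := mh.const_smul _
  have mm : MemLp (fun t => (f t + g t) / 2) q μ := by
    have := mg.add mk
    convert this using 1
    funext t
    simp
    ring
  have nf := aux_norm p hp1 μ (b + c) (by linarith) f mf hf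
  have ng := aux_norm p hp1 μ b hb g mg hg
  have nh := aux_norm p hp1 μ c hc (f - g) mh hfg
  have nk : (eLpNorm ((1 / 2 : ℝ) • (f - g)) q μ).toReal = c / 2 := by
    rw [eLpNorm_const_smul, ENNReal.toReal_mul, nh]
    simp
    ring
  have t1 := aux_tri q hq1 μ _ _ mg mk
  have t2 := aux_tri q hq1 μ _ _ mm mk
  have e1 : g + (1 / 2 : ℝ) • (f - g) = fun t => (f t + g t) / 2 := by
    funext t
    simp
    ring
  have e2 : (fun t => (f t + g t) / 2) + (1 / 2 : ℝ) • (f - g) = f := by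
    funext t
    simp
    ring
  rw [e1, nk] at t1
  rw [e2, nk] at t2
  have I0 : 0 ≤ ∫ t, |(f t + g t) / 2| ^ p ∂μ := integral_nonneg fun t => by positivity
  have nm := aux_norm p hp1 μ ((∫ t, |(f t + g t) / 2| ^ p ∂μ) ^ p⁻¹)
    (Real.rpow_nonneg I0 _) _ mm (Real.rpow_inv_rpow I0 hp0.ne').symm
  have key : (∫ t, |(f t + g t) / 2| ^ p ∂μ) ^ p⁻¹ = b + c / 2 := by
    linarith
  rw [← key, Real.rpow_inv_rpow I0 hp0.ne']
end

section
/- For every real p ≥ 2 and every real t ≥ 1/2, one has (t^p + |1−t|^p)/2 ≥ 2^{−p} + (t − 1/2)^p. -/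
/-- For `p ≥ 2` and `t ≥ 1/2`: `(t^p + |1−t|^p)/2 ≥ 2^{−p} + (t − 1/2)^p`. -/
theorem boundary_majorization (p t : ℝ) (hp : 2 ≤ p) (ht : 1/2 ≤ t) :
    (2:ℝ) ^ (-p) + (t - 1/2) ^ p ≤ (t ^ p + |1 - t| ^ p) / 2 := by
  have key : ∀ x : ℝ, 0 ≤ x → x ^ p = (x ^ 2) ^ (p / 2) := by
    intro x hx
    rw [← Real.rpow_natCast x 2, ← Real.rpow_mul hx]
    congr 1
    push_cast
    ring
  have hq : 1 ≤ p / 2 := by linarith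
  have h2 : (2:ℝ) ^ (-p) = (1/2 : ℝ) ^ p := by
    rw [Real.rpow_neg (by norm_num), one_div, Real.inv_rpow (by norm_num)]
  rw [h2, key (1/2) (by norm_num), key (t - 1/2) (by linarith), key t (by linarith),
    key |1 - t| (abs_nonneg _), sq_abs]
  have h1 : ∀ a b : ℝ, 0 ≤ a → 0 ≤ b → a ^ (p/2) + b ^ (p/2) ≤ (a + b) ^ (p/2) := by
    intro a b ha hb
    lift a to NNReal using ha
    lift b to NNReal using hb
    exact_mod_cast NNReal.add_rpow_le_rpow_add a b hq
  have h3 := (convexOn_rpow hq).2 (Set.mem_Ici.2 (sq_nonneg t)) (Set.mem_Ici.2 (sq_nonneg (1 - t)))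
    (by norm_num : (0:ℝ) ≤ 1/2) (by norm_num : (0:ℝ) ≤ 1/2) (by norm_num)
  simp only [smul_eq_mul] at h3
  have h4 := h1 ((1/2)^2) ((t - 1/2)^2) (sq_nonneg _) (sq_nonneg _)
  have h5 : ((1/2:ℝ)^2) + ((t - 1/2)^2) = 1/2 * t^2 + 1/2 * (1-t)^2 := by ring
  rw [h5] at h4
  linarith
end

section
/- For every real p ≥ 2, the function W(s) = 1 − (s−1)^{p−1} − 2(1 − s/2)^{p−1} is concave on the interval [1,2] and satisfies W(s) ≥ 0 for all s ∈ [1,2]. -/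
/-- For `p ≥ 2`, the function `W(s) = 1 − (s−1)^{p−1} − 2(1 − s/2)^{p−1}` is concave
on `[1,2]` and nonnegative there. -/
theorem W_concave_nonneg (p : ℝ) (hp : 2 ≤ p)
    (W : ℝ → ℝ)
    (hW : W = fun s => 1 - (s - 1) ^ (p - 1) - 2 * (1 - s / 2) ^ (p - 1)) :
    ConcaveOn ℝ (Set.Icc (1:ℝ) 2) W ∧ ∀ s ∈ Set.Icc (1:ℝ) 2, 0 ≤ W s := by
  subst hW
  have hq : 1 ≤ p - 1 := by linarith
  constructor
  · refine ⟨convex_Icc _ _, ?_⟩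
    rintro x ⟨hx1, hx2⟩ y ⟨hy1, hy2⟩ a b ha hb hab
    have hc := (convexOn_rpow hq).2
    have h1 := hc (x := x - 1) (by simpa using hx1) (y := y - 1) (by simpa using hy1) ha hb hab
    have h2 := hc (x := 1 - x / 2) (by simp only [Set.mem_Ici]; linarith)
      (y := 1 - y / 2) (by simp only [Set.mem_Ici]; linarith) ha hb hab
    simp only [smul_eq_mul] at h1 h2 ⊢
    have e1 : a * (x - 1) + b * (y - 1) = a * x + b * y - 1 := by linear_combination -hab
    have e2 : a * (1 - x / 2) + b * (1 - y / 2) = 1 - (a * x + b * y) / 2 := by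
      linear_combination hab
    rw [e1] at h1
    rw [e2] at h2
    linarith
  · rintro s ⟨h1, h2⟩
    have key : ∀ x : ℝ, 0 ≤ x → x ≤ 1 → x ^ (p - 1) ≤ x := fun x h0 h1 => by
      simpa using Real.rpow_le_rpow_of_exponent_ge' h0 h1 zero_le_one hq
    have k1 := key (s - 1) (by linarith) (by linarith)
    have k2 := key (1 - s / 2) (by linarith) (by linarith)
    show 0 ≤ 1 - (s - 1) ^ (p - 1) - 2 * (1 - s / 2) ^ (p - 1)
    linarith
end

section
/- For every real p ≥ 2, the function V(s) = (s^p + |1−s|^p)/2 − 2^{−p} − (s − 1/2)^p is monotonically nondecreasing on the interval [1/2, ∞); equivalently, V'(s) ≥ 0 for every s > 1/2. -/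
lemma V_aux (p : ℝ) (hp : 2 ≤ p) (s : ℝ) (hs : 1/2 < s) :
    0 ≤ (p * s ^ (p-1) + (p * |1 - s| ^ (p-2) * (1 - s)) * (-1)) / 2 - p * (s - 1/2) ^ (p-1) := by
  have key : 2 * (s - 1/2) ^ (p-1) ≤ s ^ (p-1) - |1 - s| ^ (p-2) * (1 - s) := by
    rcases lt_or_ge s 1 with h | h
    · have e : |1 - s| ^ (p-2) * (1 - s) = (1 - s) ^ (p-1) := by
        rw [abs_of_pos (by linarith), ← Real.rpow_add_one (by linarith)]
        congr 1; ring
      have h1 := Real.add_rpow_le_rpow_add (p := p-1) (a := 1 - s) (b := 2 * (s - 1/2))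
        (by linarith) (by linarith) (by linarith)
      rw [show 1 - s + 2 * (s - 1/2) = s by ring,
        Real.mul_rpow (by norm_num) (by linarith)] at h1
      have h2 : (2:ℝ) ≤ 2 ^ (p-1) := Real.self_le_rpow_of_one_le (by norm_num) (by linarith)
      have h3 : 0 ≤ (s - 1/2) ^ (p-1) := Real.rpow_nonneg (by linarith) _
      rw [e]
      nlinarith
    · have e : |1 - s| ^ (p-2) * (1 - s) = - (s - 1) ^ (p-1) := by
        rcases h.eq_or_lt with h | h
        · subst h
          simp [Real.zero_rpow (show p - 1 ≠ 0 by linarith)]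
        · rw [abs_of_neg (by linarith), show p - 1 = (p - 2) + 1 by ring,
            Real.rpow_add_one (by linarith)]
          rw [neg_sub]; ring
      have hc := (convexOn_rpow (p := p-1) (by linarith)).2
      have h1 := hc (show s ∈ Set.Ici (0:ℝ) from by simp; linarith)
        (show s - 1 ∈ Set.Ici (0:ℝ) from by simp; linarith)
        (show (0:ℝ) ≤ 1/2 by norm_num) (show (0:ℝ) ≤ 1/2 by norm_num) (by norm_num)
      simp only [smul_eq_mul] at h1
      rw [show 1/2 * s + 1/2 * (s - 1) = s - 1/2 by ring] at h1
      rw [e]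
      linarith
  nlinarith

/-- For `p ≥ 2`, the function `V(s) = (s^p + |1−s|^p)/2 − 2^{−p} − (s − 1/2)^p` is
nondecreasing on `[1/2, ∞)`; equivalently `V'(s) ≥ 0` for every `s > 1/2`. -/
theorem V_monotone (p : ℝ) (hp : 2 ≤ p)
    (V : ℝ → ℝ)
    (hV : V = fun s => (s ^ p + |1 - s| ^ p) / 2 - (2:ℝ) ^ (-p) - (s - 1/2) ^ p) :
    MonotoneOn V (Set.Ici (1/2 : ℝ)) ∧ ∀ s : ℝ, 1/2 < s → 0 ≤ deriv V s := by
  have hd : ∀ s : ℝ, HasDerivAt V ((p * s ^ (p-1) + (p * |1 - s| ^ (p-2) * (1 - s)) * (-1)) / 2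
      - p * (s - 1/2) ^ (p-1)) s := by
    intro s
    have h1 : HasDerivAt (fun s : ℝ => s ^ p) (p * s ^ (p-1)) s :=
      Real.hasDerivAt_rpow_const (Or.inr (by linarith))
    have h2 : HasDerivAt (fun s : ℝ => |1 - s| ^ p) ((p * |1 - s| ^ (p-2) * (1 - s)) * (-1)) s :=
      HasDerivAt.comp s (hasDerivAt_abs_rpow (1 - s) (by linarith))
        ((hasDerivAt_id s).const_sub 1)
    have h3 : HasDerivAt (fun s : ℝ => (s - 1/2) ^ p) (p * (s - 1/2) ^ (p-1) * 1) s :=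
      HasDerivAt.comp (h₂ := fun x : ℝ => x ^ p) (h := fun s : ℝ => s - 1/2) s
        (Real.hasDerivAt_rpow_const (x := s - 1/2) (p := p) (Or.inr (by linarith)))
        ((hasDerivAt_id s).sub_const (1/2))
    rw [mul_one] at h3
    rw [hV]
    exact (((h1.add h2).div_const 2).sub_const _).sub h3
  have hn : ∀ s : ℝ, 1/2 < s → 0 ≤ deriv V s := by
    intro s hs
    rw [(hd s).deriv]
    exact V_aux p hp s hs
  refine ⟨monotoneOn_of_deriv_nonneg (convex_Ici _)
    (fun s _ => (hd s).continuousAt.continuousWithinAt)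
    (fun s _ => (hd s).differentiableAt.differentiableWithinAt) ?_, hn⟩
  intro s hs
  rw [interior_Ici] at hs
  exact hn s hs
end

section
/- Let p ∈ [2,∞) and ε ∈ [0,2]. If f, g ∈ L^p([0,1]) satisfy ‖f‖_p = ‖g‖_p = 1 and ‖f−g‖_p ≥ ε, then ‖(f+g)/2‖_p ≤ (1 − (ε/2)^p)^{1/p}. Equivalently, 1 − ‖(f+g)/2‖_p ≥ 1 − (1 − (ε/2)^p)^{1/p}. -/
open MeasureTheory Set

lemma clarkson_pointwise (p : ℝ) (hp : 2 ≤ p) (a b : ℝ) :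
    |(a + b) / 2| ^ p + |(a - b) / 2| ^ p ≤ (|a| ^ p + |b| ^ p) / 2 := by
  have key : ∀ x : ℝ, |x| ^ p = (x ^ 2) ^ (p / 2) := by
    intro x
    rw [← sq_abs x, ← Real.rpow_natCast, ← Real.rpow_mul (abs_nonneg x)]
    congr 1
    push_cast
    ring
  have hq : 1 ≤ p / 2 := by linarith
  rw [key, key, key, key]
  have h1 : (((a + b) / 2) ^ 2) ^ (p / 2) + (((a - b) / 2) ^ 2) ^ (p / 2)
      ≤ (((a + b) / 2) ^ 2 + ((a - b) / 2) ^ 2) ^ (p / 2) := by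
    have := NNReal.add_rpow_le_rpow_add (⟨((a + b) / 2) ^ 2, sq_nonneg _⟩ : NNReal)
      ⟨((a - b) / 2) ^ 2, sq_nonneg _⟩ hq
    exact_mod_cast this
  have hc := convexOn_rpow hq
  have h2 := hc.2 (mem_Ici.2 (sq_nonneg a)) (mem_Ici.2 (sq_nonneg b))
    (show (0:ℝ) ≤ 1 / 2 by norm_num) (show (0:ℝ) ≤ 1 / 2 by norm_num) (by norm_num)
  simp only [smul_eq_mul] at h2
  have h3 : ((a + b) / 2) ^ 2 + ((a - b) / 2) ^ 2 = 1 / 2 * a ^ 2 + 1 / 2 * b ^ 2 := by ring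
  rw [h3] at h1
  linarith

/-- Uniform convexity of `L^p([0,1])` for `p ≥ 2`: if `‖f‖_p = ‖g‖_p = 1` and
`‖f−g‖_p ≥ ε`, then `‖(f+g)/2‖_p ≤ (1 − (ε/2)^p)^{1/p}`. Here
`‖h‖_p = (∫₀¹ |h|^p)^{1/p}`. -/
theorem uniform_convexity_ge_two (p ε : ℝ) (hp : 2 ≤ p) (hε0 : 0 ≤ ε) (hε2 : ε ≤ 2)
    (f g : ℝ → ℝ) (hfm : Measurable f) (hgm : Measurable g)
    (hfi : IntegrableOn (fun t => |f t| ^ p) (Icc 0 1))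
    (hgi : IntegrableOn (fun t => |g t| ^ p) (Icc 0 1))
    (hf : (∫ t in Icc (0:ℝ) 1, |f t| ^ p) ^ (1/p) = 1)
    (hg : (∫ t in Icc (0:ℝ) 1, |g t| ^ p) ^ (1/p) = 1)
    (hfg : ε ≤ (∫ t in Icc (0:ℝ) 1, |f t - g t| ^ p) ^ (1/p)) :
    (∫ t in Icc (0:ℝ) 1, |(f t + g t) / 2| ^ p) ^ (1/p) ≤ (1 - (ε/2) ^ p) ^ (1/p) := by
  have hp0 : 0 < p := by linarith
  have nn : ∀ h : ℝ → ℝ, 0 ≤ ∫ t in Icc (0:ℝ) 1, |h t| ^ p := fun h =>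
    integral_nonneg fun t => Real.rpow_nonneg (abs_nonneg _) _
  have one_of : ∀ x : ℝ, 0 ≤ x → x ^ (1 / p) = 1 → x = 1 := by
    intro x hx h
    have h' := congrArg (fun y : ℝ => y ^ p) h
    simpa [← Real.rpow_mul hx, hp0.ne'] using h'
  have hF : ∫ t in Icc (0:ℝ) 1, |f t| ^ p = 1 :=
    one_of _ (nn f) hf
  have hG : ∫ t in Icc (0:ℝ) 1, |g t| ^ p = 1 :=
    one_of _ (nn g) hg
  have hR : IntegrableOn (fun t => (|f t| ^ p + |g t| ^ p) / 2) (Icc 0 1) :=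
    (hfi.add hgi).div_const 2
  have hA : IntegrableOn (fun t => |(f t + g t) / 2| ^ p) (Icc 0 1) := by
    refine Integrable.mono' hR (Measurable.aestronglyMeasurable (by fun_prop)) (Filter.Eventually.of_forall fun t => ?_)
    rw [Real.norm_of_nonneg (by positivity)]
    have := clarkson_pointwise p hp (f t) (g t)
    have h0 : 0 ≤ |(f t - g t) / 2| ^ p := by positivity
    linarith
  have hB : IntegrableOn (fun t => |(f t - g t) / 2| ^ p) (Icc 0 1) := by
    refine Integrable.mono' hR (Measurable.aestronglyMeasurable (by fun_prop)) (Filter.Eventually.of_forall fun t => ?_)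
    rw [Real.norm_of_nonneg (by positivity)]
    have := clarkson_pointwise p hp (f t) (g t)
    have h0 : 0 ≤ |(f t + g t) / 2| ^ p := by positivity
    linarith
  have hmain : (∫ t in Icc (0:ℝ) 1, |(f t + g t) / 2| ^ p)
      + (∫ t in Icc (0:ℝ) 1, |(f t - g t) / 2| ^ p) ≤ 1 := by
    rw [← integral_add hA hB]
    calc _ ≤ ∫ t in Icc (0:ℝ) 1, (|f t| ^ p + |g t| ^ p) / 2 :=
          integral_mono (hA.add hB) hR fun t => clarkson_pointwise p hp (f t) (g t)
      _ = 1 := by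
          rw [integral_div, integral_add hfi hgi, hF, hG]; norm_num
  have hD : (∫ t in Icc (0:ℝ) 1, |(f t - g t) / 2| ^ p)
      = (∫ t in Icc (0:ℝ) 1, |f t - g t| ^ p) / 2 ^ p := by
    rw [← integral_div]
    congr 1
    ext t
    rw [abs_div, Real.div_rpow (abs_nonneg _) (abs_nonneg _), abs_two]
  have hE : ε ^ p ≤ ∫ t in Icc (0:ℝ) 1, |f t - g t| ^ p := by
    have h := Real.rpow_le_rpow hε0 hfg hp0.le
    rwa [← Real.rpow_mul (nn fun t => f t - g t), one_div_mul_cancel hp0.ne', Real.rpow_one] at h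
  have hE2 : (ε / 2) ^ p ≤ ∫ t in Icc (0:ℝ) 1, |(f t - g t) / 2| ^ p := by
    rw [hD, Real.div_rpow hε0 (by norm_num)]
    gcongr
  exact Real.rpow_le_rpow (nn fun t => (f t + g t) / 2) (by linarith) (by positivity)
end

section
/- Let p ∈ [2,∞) and ε ∈ (0,2]. For every η > 0 there exist f, g ∈ L^p([0,1]) with ‖f‖_p = ‖g‖_p = 1 and ‖f−g‖_p ≥ ε such that ‖(f+g)/2‖_p > (1 − (ε/2)^p)^{1/p} − η. -/
open MeasureTheory Set

lemma step_aux (u v : ℝ) :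
    IntegrableOn (fun t : ℝ => if t ≤ 1/2 then u else v) (Icc 0 1) ∧
    ∫ t in Icc (0:ℝ) 1, (if t ≤ 1/2 then u else v) = (u + v) / 2 := by
  have hU : Icc (0:ℝ) 1 = Icc 0 (1/2) ∪ Ioc (1/2) 1 :=
    (Icc_union_Ioc_eq_Icc (by norm_num) (by norm_num)).symm
  have e1 : EqOn (fun t : ℝ => if t ≤ 1/2 then u else v) (fun _ => u) (Icc 0 (1/2)) := by
    intro t ht
    exact if_pos ht.2
  have e2 : EqOn (fun t : ℝ => if t ≤ 1/2 then u else v) (fun _ => v) (Ioc (1/2) 1) := by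
    intro t ht
    exact if_neg (not_le.2 ht.1)
  have i1 : IntegrableOn (fun t : ℝ => if t ≤ 1/2 then u else v) (Icc 0 (1/2)) :=
    (integrableOn_congr_fun e1 measurableSet_Icc).2 (integrableOn_const (by simp))
  have i2 : IntegrableOn (fun t : ℝ => if t ≤ 1/2 then u else v) (Ioc (1/2) 1) :=
    (integrableOn_congr_fun e2 measurableSet_Ioc).2 (integrableOn_const (by simp))
  have hd : Disjoint (Icc (0:ℝ) (1/2)) (Ioc (1/2) 1) := by
    rw [Set.disjoint_left]
    intro t h1 h2
    exact absurd h1.2 (not_le.2 h2.1)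
  rw [hU]
  refine ⟨i1.union i2, ?_⟩
  rw [setIntegral_union hd measurableSet_Ioc i1 i2, setIntegral_congr_fun measurableSet_Icc e1,
    setIntegral_congr_fun measurableSet_Ioc e2]
  simp only [setIntegral_const, Measure.real, Real.volume_Icc, Real.volume_Ioc, smul_eq_mul]
  rw [ENNReal.toReal_ofReal (by norm_num), ENNReal.toReal_ofReal (by norm_num)]
  ring

/-- Sharpness for `p ≥ 2`: for every `η > 0` there are unit vectors `f, g` in
`L^p([0,1])` with `‖f−g‖_p ≥ ε` and `‖(f+g)/2‖_p > (1 − (ε/2)^p)^{1/p} − η`. Here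
`‖h‖_p = (∫₀¹ |h|^p)^{1/p}`. -/
theorem uniform_convexity_ge_two_sharp (p ε : ℝ) (hp : 2 ≤ p) (hε0 : 0 < ε) (hε2 : ε ≤ 2)
    (η : ℝ) (hη : 0 < η) :
    ∃ f g : ℝ → ℝ, Measurable f ∧ Measurable g ∧
      IntegrableOn (fun t => |f t| ^ p) (Icc 0 1) ∧
      IntegrableOn (fun t => |g t| ^ p) (Icc 0 1) ∧
      (∫ t in Icc (0:ℝ) 1, |f t| ^ p) ^ (1/p) = 1 ∧
      (∫ t in Icc (0:ℝ) 1, |g t| ^ p) ^ (1/p) = 1 ∧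
      ε ≤ (∫ t in Icc (0:ℝ) 1, |f t - g t| ^ p) ^ (1/p) ∧
      (1 - (ε/2) ^ p) ^ (1/p) - η < (∫ t in Icc (0:ℝ) 1, |(f t + g t) / 2| ^ p) ^ (1/p) := by
  have hp0 : 0 < p := by linarith
  have hpn : p ≠ 0 := hp0.ne'
  obtain ⟨c, hc⟩ : ∃ c, c = (ε/2) ^ p := ⟨_, rfl⟩
  have hc0 : 0 ≤ c := hc ▸ Real.rpow_nonneg (by linarith) _
  have hc1 : c ≤ 1 := hc ▸ Real.rpow_le_one (by linarith) (by linarith) hp0.le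
  obtain ⟨a, ha⟩ : ∃ a : ℝ, a = (2 * (1 - c)) ^ (1/p) := ⟨_, rfl⟩
  obtain ⟨b, hb⟩ : ∃ b : ℝ, b = (2 * c) ^ (1/p) := ⟨_, rfl⟩
  have ha0 : 0 ≤ a := ha ▸ Real.rpow_nonneg (by linarith) _
  have hb0 : 0 ≤ b := hb ▸ Real.rpow_nonneg (by linarith) _
  have hap : a ^ p = 2 * (1 - c) := by
    rw [ha, ← Real.rpow_mul (by linarith), one_div_mul_cancel hpn, Real.rpow_one]
  have hbp : b ^ p = 2 * c := by
    rw [hb, ← Real.rpow_mul (by linarith), one_div_mul_cancel hpn, Real.rpow_one]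
  have h2b : (2 * b) ^ p / 2 = ε ^ p := by
    rw [Real.mul_rpow (by norm_num) hb0, hbp, hc, Real.div_rpow hε0.le (by norm_num)]
    have : (0:ℝ) < 2 ^ p := by positivity
    field_simp
  have hm : Measurable (fun t : ℝ => if t ≤ 1/2 then a else b) :=
    Measurable.ite measurableSet_Iic measurable_const measurable_const
  have hm' : Measurable (fun t : ℝ => if t ≤ 1/2 then a else -b) :=
    Measurable.ite measurableSet_Iic measurable_const measurable_const
  have E1 : (fun t : ℝ => |if t ≤ 1/2 then a else b| ^ p)
      = fun t => if t ≤ 1/2 then a ^ p else b ^ p := by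
    funext t
    split_ifs <;> simp [abs_of_nonneg ha0, abs_of_nonneg hb0]
  have E2 : (fun t : ℝ => |if t ≤ 1/2 then a else -b| ^ p)
      = fun t => if t ≤ 1/2 then a ^ p else b ^ p := by
    funext t
    split_ifs <;> simp [abs_of_nonneg ha0, abs_of_nonneg hb0]
  have E3 : (fun t : ℝ => |(if t ≤ 1/2 then a else b) - (if t ≤ 1/2 then a else -b)| ^ p)
      = fun t => if t ≤ 1/2 then 0 else (2 * b) ^ p := by
    funext t
    split_ifs
    · simp [Real.zero_rpow hpn]
    · rw [sub_neg_eq_add, ← two_mul, abs_of_nonneg (by linarith)]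
  have E4 : (fun t : ℝ => |((if t ≤ 1/2 then a else b) + (if t ≤ 1/2 then a else -b)) / 2| ^ p)
      = fun t => if t ≤ 1/2 then a ^ p else 0 := by
    funext t
    split_ifs
    · rw [add_self_div_two, abs_of_nonneg ha0]
    · simp [Real.zero_rpow hpn]
  have hone : (a ^ p + b ^ p) / 2 = 1 := by rw [hap, hbp]; ring
  refine ⟨fun t => if t ≤ 1/2 then a else b, fun t => if t ≤ 1/2 then a else -b, hm, hm',
    ?_, ?_, ?_, ?_, ?_, ?_⟩
  · rw [E1]; exact (step_aux _ _).1
  · rw [E2]; exact (step_aux _ _).1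
  · rw [E1, (step_aux _ _).2, hone, Real.one_rpow]
  · rw [E2, (step_aux _ _).2, hone, Real.one_rpow]
  · rw [E3, (step_aux _ _).2, zero_add, h2b, ← Real.rpow_mul hε0.le, mul_one_div_cancel hpn,
      Real.rpow_one]
  · rw [E4, (step_aux _ _).2, add_zero, hap, mul_div_cancel_left₀ _ two_ne_zero, ← hc]
    linarith
end

section
/- Let p ∈ (1,2) be a real number. Then for every t ≥ 1/2 one has (t − 1/2)·(t^{p−1} − sgn(1−t)·|1−t|^{p−1}) ≤ t^p + |1−t|^p, where sgn denotes the sign function with sgn(0) = 0. Equivalently, with f(s) = (s^{1/p} − 1/2)^p and g(s) = |1 − s^{1/p}|^p, one has f(s)(1 + g'(s)) − f'(s)(s + g(s)) ≤ 0 for all s ≥ 2^{−p}. -/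
/-- For `1 < p < 2` and `t ≥ 1/2`:
`(t − 1/2)·(t^{p−1} − sgn(1−t)·|1−t|^{p−1}) ≤ t^p + |1−t|^p`. -/
theorem tangent_slope_inequality (p t : ℝ) (hp1 : 1 < p) (hp2 : p < 2) (ht : 1/2 ≤ t) :
    (t - 1/2) * (t ^ (p - 1) - Real.sign (1 - t) * |1 - t| ^ (p - 1))
      ≤ t ^ p + |1 - t| ^ p := by
  have key : ∀ x : ℝ, 0 ≤ x → x ^ p = x * x ^ (p - 1) := by
    intro x hx
    have h := Real.rpow_add_of_nonneg hx zero_le_one (by linarith : 0 ≤ p - 1)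
    rw [Real.rpow_one] at h
    rw [← h]
    congr 1
    ring
  have ht0 : 0 ≤ t := by linarith
  rw [key t ht0, key _ (abs_nonneg _)]
  have hA : 0 ≤ t ^ (p - 1) := Real.rpow_nonneg ht0 _
  have hB : 0 ≤ |1 - t| ^ (p - 1) := Real.rpow_nonneg (abs_nonneg _) _
  have hAB : 1 < t → |1 - t| ^ (p - 1) ≤ t ^ (p - 1) := by
    intro h
    apply Real.rpow_le_rpow (abs_nonneg _) _ (by linarith)
    rw [abs_of_neg (by linarith)]
    linarith
  have hu := abs_nonneg (1 - t)
  rcases lt_trichotomy (1 - t) 0 with h | h | h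
  · have h3 := hAB (by linarith)
    rw [Real.sign_of_neg h]
    have h4 : |1 - t| = t - 1 := by rw [abs_of_neg h]; ring
    rw [h4] at h3 ⊢
    linarith
  · rw [h, Real.sign_zero] at *
    nlinarith [mul_nonneg hu hB]
  · rw [Real.sign_of_pos h]
    nlinarith [mul_nonneg hu hB, mul_nonneg (sub_nonneg.2 ht) hB]
end

section
/- Let p ∈ (1,2) be a real number. Then for every t > 1/2 the quantity t^{p−1} − sgn(1−t)·|1−t|^{p−1} is strictly positive (where sgn(0) = 0), and the function h(t) = (t − 1/2)^{p−1} / (t^{p−1} − sgn(1−t)·|1−t|^{p−1}) is nonincreasing on (1/2, ∞). Equivalently, with f(s) = (s^{1/p} − 1/2)^p and g(s) = |1 − s^{1/p}|^p, one has 1 + g'(s) > 0 and s ↦ f'(s)/(1 + g'(s)) is nonincreasing for s > 2^{−p}. -/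
theorem spread_rpow (a A B C D : ℝ) (ha0 : 0 < a) (ha1 : a < 1) (hA : 0 ≤ A) (hAB : A ≤ B)
    (hAC : A ≤ C) (h : A + D = B + C) : A ^ a + D ^ a ≤ B ^ a + C ^ a := by
  rcases eq_or_lt_of_le (show A ≤ D by linarith) with hAD | hAD
  · have h1 : B = A := by linarith
    have h2 : C = A := by linarith
    rw [h1, h2, ← hAD]
  · have hc := (Real.concaveOn_rpow ha0.le ha1.le).2
    have hd : 0 < D - A := by linarith
    have hs : (D - B) / (D - A) + (B - A) / (D - A) = 1 := by field_simp; ring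
    have n1 : 0 ≤ (D - B) / (D - A) := div_nonneg (by linarith) hd.le
    have n2 : 0 ≤ (B - A) / (D - A) := div_nonneg (by linarith) hd.le
    have mA : A ∈ Set.Ici (0:ℝ) := hA
    have mD : D ∈ Set.Ici (0:ℝ) := by simp only [Set.mem_Ici]; linarith
    have k1 := hc mA mD n1 n2 hs
    have k2 := hc mA mD n2 n1 (by linarith)
    simp only [smul_eq_mul] at k1 k2
    have e1 : (D - B) / (D - A) * A + (B - A) / (D - A) * D = B := by field_simp; ring
    have e2 : (B - A) / (D - A) * A + (D - B) / (D - A) * D = C := by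
      have : C = A + D - B := by linarith
      rw [this]; field_simp; ring
    rw [e1] at k1
    rw [e2] at k2
    have e3 : (D - B) / (D - A) = 1 - (B - A) / (D - A) := by linarith
    rw [e3] at k1 k2
    linarith

theorem sg_nonneg (a z : ℝ) (ha0 : 0 < a) (hz : 0 ≤ z) : Real.sign z * |z| ^ a = z ^ a := by
  rcases hz.eq_or_lt with rfl | hz
  · simp [Real.zero_rpow ha0.ne']
  · rw [Real.sign_of_pos hz, abs_of_pos hz, one_mul]

theorem sg_nonpos (a z : ℝ) (ha0 : 0 < a) (hz : z ≤ 0) :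
    Real.sign z * |z| ^ a = -(-z) ^ a := by
  rcases hz.eq_or_lt with rfl | hz
  · simp [Real.zero_rpow ha0.ne']
  · rw [Real.sign_of_neg hz, abs_of_neg hz]; ring

theorem sg_scale (a u z : ℝ) (ha0 : 0 < a) (hu : 0 < u) :
    Real.sign (u * z) * |u * z| ^ a = u ^ a * (Real.sign z * |z| ^ a) := by
  rcases le_total 0 z with hz | hz
  · rw [sg_nonneg a _ ha0 (by positivity), sg_nonneg a _ ha0 hz, Real.mul_rpow hu.le hz]
  · rw [sg_nonpos a _ ha0 (mul_nonpos_of_nonneg_of_nonpos hu.le hz), sg_nonpos a _ ha0 hz,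
      ← mul_neg, Real.mul_rpow hu.le (by linarith)]
    ring

theorem slope_F_anti (a x y : ℝ) (ha0 : 0 < a) (ha1 : a < 1) (hx : 0 < x) (hxy : x ≤ y) :
    (1 + y) ^ a - Real.sign (y - 1) * |y - 1| ^ a
      ≤ (1 + x) ^ a - Real.sign (x - 1) * |x - 1| ^ a := by
  have low : ∀ x y : ℝ, 0 < x → x ≤ y → y ≤ 1 →
      (1 + y) ^ a - Real.sign (y - 1) * |y - 1| ^ a
        ≤ (1 + x) ^ a - Real.sign (x - 1) * |x - 1| ^ a := by
    intro x y hx hxy hy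
    rw [sg_nonpos a _ ha0 (by linarith), sg_nonpos a _ ha0 (by linarith)]
    have := spread_rpow a (-(y - 1)) (-(x - 1)) (1 + x) (1 + y) ha0 ha1 (by linarith)
      (by linarith) (by linarith) (by ring)
    linarith
  have high : ∀ x y : ℝ, 1 ≤ x → x ≤ y →
      (1 + y) ^ a - Real.sign (y - 1) * |y - 1| ^ a
        ≤ (1 + x) ^ a - Real.sign (x - 1) * |x - 1| ^ a := by
    intro x y hx hxy
    rw [sg_nonneg a _ ha0 (by linarith), sg_nonneg a _ ha0 (by linarith)]
    have := spread_rpow a (x - 1) (y - 1) (1 + x) (1 + y) ha0 ha1 (by linarith)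
      (by linarith) (by linarith) (by ring)
    linarith
  rcases le_total y 1 with hy | hy
  · exact low x y hx hxy hy
  · rcases le_total x 1 with h | h
    · exact (high 1 y le_rfl hy).trans (low x 1 hx h le_rfl)
    · exact high x y h hxy


/-- For `1 < p < 2`, the quantity `t^{p−1} − sgn(1−t)·|1−t|^{p−1}` is strictly positive
for `t > 1/2`, and `h(t) = (t − 1/2)^{p−1} / (t^{p−1} − sgn(1−t)·|1−t|^{p−1})` is
nonincreasing on `(1/2, ∞)`. -/
theorem slope_positive_and_antitone (p : ℝ) (hp1 : 1 < p) (hp2 : p < 2) :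
    (∀ t : ℝ, 1/2 < t → 0 < t ^ (p - 1) - Real.sign (1 - t) * |1 - t| ^ (p - 1)) ∧
    AntitoneOn (fun t : ℝ =>
        (t - 1/2) ^ (p - 1) / (t ^ (p - 1) - Real.sign (1 - t) * |1 - t| ^ (p - 1)))
      (Set.Ioi (1/2 : ℝ)) := by
  obtain ⟨a, rfl⟩ : ∃ a, p = a + 1 := ⟨p - 1, by ring⟩
  have ha0 : 0 < a := by linarith
  have ha1 : a < 1 := by linarith
  simp only [add_sub_cancel_right]
  have pos : ∀ t : ℝ, 1/2 < t → 0 < t ^ a - Real.sign (1 - t) * |1 - t| ^ a := by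
    intro t ht
    rcases le_total t 1 with h | h
    · rw [sg_nonneg a _ ha0 (by linarith)]
      have := Real.rpow_lt_rpow (show 0 ≤ 1 - t by linarith) (show 1 - t < t by linarith) ha0
      linarith
    · rw [sg_nonpos a _ ha0 (by linarith)]
      have h1 := Real.rpow_pos_of_pos (show 0 < t by linarith) a
      have h2 := Real.rpow_nonneg (show 0 ≤ -(1 - t) by linarith) a
      linarith
  refine ⟨pos, ?_⟩
  have key : ∀ t : ℝ, 1/2 < t → t ^ a - Real.sign (1 - t) * |1 - t| ^ a =
      (t - 1/2) ^ a * ((1 + (2 * t - 1)⁻¹) ^ a -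
        Real.sign ((2 * t - 1)⁻¹ - 1) * |(2 * t - 1)⁻¹ - 1| ^ a) := by
    intro t ht
    have hu : 0 < t - 1/2 := by linarith
    have hv : 0 < 2 * t - 1 := by linarith
    have hv' := inv_pos.mpr hv
    have hm : (2 * t - 1) * (2 * t - 1)⁻¹ = 1 := mul_inv_cancel₀ hv.ne'
    have e1 : t = (t - 1/2) * (1 + (2 * t - 1)⁻¹) := by linear_combination (-1/2) * hm
    have e2 : 1 - t = (t - 1/2) * ((2 * t - 1)⁻¹ - 1) := by linear_combination (-1/2) * hm
    rw [mul_sub, ← sg_scale a _ _ ha0 hu, ← Real.mul_rpow hu.le (by linarith), ← e1, ← e2]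
  intro s hs t ht hst
  simp only [Set.mem_Ioi] at hs ht
  have ps := pos s hs
  have pt := pos t ht
  have us := Real.rpow_pos_of_pos (show 0 < s - 1/2 by linarith) a
  have ut := Real.rpow_pos_of_pos (show 0 < t - 1/2 by linarith) a
  have hF := slope_F_anti a (2 * t - 1)⁻¹ (2 * s - 1)⁻¹ ha0 ha1 (inv_pos.mpr (by linarith))
    (inv_anti₀ (by linarith) (by linarith))
  have ks := key s hs
  have kt := key t ht
  show (t - 1/2) ^ a / _ ≤ (s - 1/2) ^ a / _
  rw [div_le_div_iff₀ pt ps, ks, kt]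
  have := mul_le_mul_of_nonneg_left hF (mul_pos us ut).le
  linarith
end

section
/- Let p ∈ (1,2) and ε ∈ (0,2), and let t* > 1/2 be the (unique) real number with t*^p + |1−t*|^p = 2ε^{−p}. Set h(t*) = (t* − 1/2)^{p−1} / (t*^{p−1} − sgn(1−t*)·|1−t*|^{p−1}). Then for every t ≥ 1/2 one has (t* − 1/2)^p + h(t*)·(t^p + |1−t|^p − 2ε^{−p}) ≥ (t − 1/2)^p. -/
/-- Concavity of `x ^ q` in increment form. -/
lemma tpm_incr (q A B d : ℝ) (hq0 : 0 < q) (hq1 : q < 1) (hA : 0 ≤ A) (hAB : A ≤ B)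
    (hd : 0 ≤ d) : (B + d) ^ q + A ^ q ≤ B ^ q + (A + d) ^ q := by
  rcases eq_or_lt_of_le (show 0 ≤ B + d - A by linarith) with h | h
  · have h1 : d = 0 := by linarith
    subst h1; simp
  have hc := (Real.concaveOn_rpow hq0.le hq1.le).2
  have hx : A ∈ Set.Ici (0 : ℝ) := hA
  have hy : B + d ∈ Set.Ici (0 : ℝ) := by simp only [Set.mem_Ici]; linarith
  set w := d / (B + d - A) with hw
  set v := (B - A) / (B + d - A) with hv
  have hw0 : 0 ≤ w := div_nonneg hd h.le
  have hv0 : 0 ≤ v := div_nonneg (by linarith) h.le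
  have hwv : w + v = 1 := by rw [hw, hv]; field_simp; ring
  have e : w * (B + d - A) = d := by rw [hw]; field_simp
  have h1 := hc hx hy hw0 hv0 hwv
  have h2 := hc hx hy hv0 hw0 (by linarith)
  simp only [smul_eq_mul] at h1 h2
  have e1 : w * A + v * (B + d) = B := by
    rw [show v = 1 - w by linarith]; linear_combination -e
  have e2 : v * A + w * (B + d) = A + d := by
    rw [show v = 1 - w by linarith]; linear_combination e
  rw [e1] at h1
  rw [e2] at h2
  have e3 : v = 1 - w := by linarith
  rw [e3] at h1 h2
  linarith

/-- Odd extension of `x ^ q`. -/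
noncomputable def tpmS (q x : ℝ) : ℝ := |x| ^ (q - 1) * x

lemma tpmS_nonneg (q x : ℝ) (hq0 : 0 < q) (hx : 0 ≤ x) : tpmS q x = x ^ q := by
  unfold tpmS
  rcases eq_or_lt_of_le hx with h | h
  · subst h; simp [Real.zero_rpow hq0.ne']
  · rw [abs_of_pos h, Real.rpow_sub_one h.ne']; field_simp

lemma tpmS_neg (q x : ℝ) : tpmS q (-x) = - tpmS q x := by
  simp [tpmS]

lemma tpmS_mul (q c x : ℝ) (hc : 0 < c) : tpmS q (c * x) = c ^ q * tpmS q x := by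
  unfold tpmS
  rw [abs_mul, abs_of_pos hc, Real.mul_rpow hc.le (abs_nonneg x), Real.rpow_sub_one hc.ne']
  field_simp

lemma tpmS_sign (q x : ℝ) (hq0 : 0 < q) : Real.sign x * |x| ^ q = tpmS q x := by
  rcases lt_trichotomy x 0 with h | h | h
  · have := tpmS_neg q (-x)
    rw [neg_neg, tpmS_nonneg q (-x) hq0 (by linarith)] at this
    rw [this, Real.sign_of_neg h, abs_of_neg h]; ring
  · subst h; simp [tpmS]
  · rw [tpmS_nonneg q x hq0 h.le, Real.sign_of_pos h, abs_of_pos h]; ring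

lemma tpm_anti (q u v : ℝ) (hq0 : 0 < q) (hq1 : q < 1) (hu : 0 ≤ u) (huv : u ≤ v) :
    (1 + v) ^ q + tpmS q (1 - v) ≤ (1 + u) ^ q + tpmS q (1 - u) := by
  have c1 : ∀ u v : ℝ, 0 ≤ u → u ≤ v → v ≤ 1 →
      (1 + v) ^ q + tpmS q (1 - v) ≤ (1 + u) ^ q + tpmS q (1 - u) := by
    intro u v hu huv hv
    have := tpm_incr q (1 - v) (1 + u) (v - u) hq0 hq1 (by linarith) (by linarith) (by linarith)
    rw [tpmS_nonneg q _ hq0 (by linarith), tpmS_nonneg q _ hq0 (by linarith)]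
    ring_nf at this ⊢
    linarith
  have c2 : ∀ u v : ℝ, 1 ≤ u → u ≤ v →
      (1 + v) ^ q + tpmS q (1 - v) ≤ (1 + u) ^ q + tpmS q (1 - u) := by
    intro u v hu huv
    have := tpm_incr q (u - 1) (1 + u) (v - u) hq0 hq1 (by linarith) (by linarith) (by linarith)
    rw [← neg_sub v 1, ← neg_sub u 1, tpmS_neg, tpmS_neg,
      tpmS_nonneg q _ hq0 (by linarith), tpmS_nonneg q _ hq0 (by linarith)]
    ring_nf at this ⊢
    linarith
  rcases le_total v 1 with h | h
  · exact c1 u v hu huv h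
  rcases le_total u 1 with h' | h'
  · exact (c2 1 v le_rfl h).trans (c1 u 1 hu h' le_rfl)
  · exact c2 u v h' huv

/-- The derivative (up to the factor `p`) of `t ^ p + |1 - t| ^ p`. -/
noncomputable def tpmD (q t : ℝ) : ℝ := t ^ q + tpmS q (t - 1)

lemma tpmD_eq (q t : ℝ) (ht : 1/2 < t) :
    tpmD q t = (t - 1/2) ^ q *
      ((1 + 1 / (2 * (t - 1/2))) ^ q + tpmS q (1 - 1 / (2 * (t - 1/2)))) := by
  have hx : 0 < t - 1/2 := by linarith
  rw [mul_add, ← tpmS_mul q _ _ hx, ← Real.mul_rpow hx.le (by positivity)]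
  unfold tpmD
  have e : (t - 1/2) * (1 / (2 * (t - 1/2))) = 1/2 := by
    generalize t - 1/2 = x at hx
    field_simp
  congr 2
  · rw [mul_add, e]; ring
  · rw [mul_sub, e]; ring

lemma tpmD_cross (q a t : ℝ) (hq0 : 0 < q) (hq1 : q < 1) (ha : 1/2 < a) (hat : a ≤ t) :
    (t - 1/2) ^ q * tpmD q a ≤ (a - 1/2) ^ q * tpmD q t := by
  have hx : 0 < a - 1/2 := by linarith
  have hy : 0 < t - 1/2 := by linarith
  rw [tpmD_eq q a ha, tpmD_eq q t (by linarith)]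
  have h := tpm_anti q (1 / (2 * (t - 1/2))) (1 / (2 * (a - 1/2))) hq0 hq1 (by positivity)
    (one_div_le_one_div_of_le (by positivity) (by linarith))
  have h1 : 0 ≤ (t - 1/2) ^ q * (a - 1/2) ^ q := by positivity
  nlinarith [mul_le_mul_of_nonneg_left h h1]

lemma tpmD_pos (q t : ℝ) (hq0 : 0 < q) (ht : 1/2 < t) : 0 < tpmD q t := by
  unfold tpmD
  have h0 : 0 < t ^ q := Real.rpow_pos_of_pos (by linarith) q
  rcases le_total 1 t with h | h
  · rw [tpmS_nonneg q _ hq0 (by linarith)]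
    have : 0 ≤ (t - 1) ^ q := Real.rpow_nonneg (by linarith) q
    linarith
  · rw [← neg_sub 1 t, tpmS_neg, tpmS_nonneg q _ hq0 (by linarith)]
    have := Real.rpow_lt_rpow (show 0 ≤ 1 - t by linarith) (show 1 - t < t by linarith) hq0
    linarith


/-- For `1 < p < 2`, `ε ∈ (0,2)` and `t* > 1/2` with `t*^p + |1−t*|^p = 2ε^{−p}`, the
tangent plane dominates: for every `t ≥ 1/2`,
`(t*−1/2)^p + h(t*)·(t^p + |1−t|^p − 2ε^{−p}) ≥ (t−1/2)^p`, where
`h(t*) = (t*−1/2)^{p−1} / (t*^{p−1} − sgn(1−t*)·|1−t*|^{p−1})`. -/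
theorem tangent_plane_majorization (p ε tstar : ℝ) (hp1 : 1 < p) (hp2 : p < 2)
    (hε0 : 0 < ε) (hε2 : ε < 2) (htstar : 1/2 < tstar)
    (heq : tstar ^ p + |1 - tstar| ^ p = 2 * ε ^ (-p)) :
    ∀ t : ℝ, 1/2 ≤ t →
      (t - 1/2) ^ p ≤ (tstar - 1/2) ^ p +
        ((tstar - 1/2) ^ (p - 1) /
            (tstar ^ (p - 1) - Real.sign (1 - tstar) * |1 - tstar| ^ (p - 1))) *
          (t ^ p + |1 - t| ^ p - 2 * ε ^ (-p)) := by
  have hq0 : 0 < p - 1 := by linarith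
  have hq1 : p - 1 < 1 := by linarith
  have hDeq : tstar ^ (p - 1) - Real.sign (1 - tstar) * |1 - tstar| ^ (p - 1)
      = tpmD (p - 1) tstar := by
    rw [tpmS_sign _ _ hq0, ← neg_sub tstar 1, tpmS_neg]; unfold tpmD; ring
  rw [hDeq, ← heq]
  have hD := tpmD_pos (p - 1) tstar hq0 htstar
  set h := (tstar - 1/2) ^ (p - 1) / tpmD (p - 1) tstar with hh
  have hhD : h * tpmD (p - 1) tstar = (tstar - 1/2) ^ (p - 1) := by
    rw [hh]; field_simp
  set U : ℝ → ℝ := fun t => h * (t ^ p + |t - 1| ^ p) - (t - 1/2) ^ p with hU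
  have hder : ∀ t : ℝ,
      HasDerivAt U (p * (h * tpmD (p - 1) t - (t - 1/2) ^ (p - 1))) t := by
    intro t
    have d1 : HasDerivAt (fun t : ℝ => t ^ p) (p * t ^ (p - 1)) t :=
      Real.hasDerivAt_rpow_const (Or.inr hp1.le)
    have d2 : HasDerivAt (fun t : ℝ => |t - 1| ^ p) (p * |t - 1| ^ (p - 2) * (t - 1)) t :=
      HasDerivAt.comp_sub_const t 1 (hasDerivAt_abs_rpow (t - 1) hp1)
    have d3 : HasDerivAt (fun t : ℝ => (t - 1/2) ^ p) (p * (t - 1/2) ^ (p - 1)) t :=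
      HasDerivAt.comp_sub_const t (1/2) (Real.hasDerivAt_rpow_const (Or.inr hp1.le))
    have d := ((d1.add d2).const_mul h).sub d3
    refine d.congr_deriv ?_
    unfold tpmD tpmS
    rw [show p - 1 - 1 = p - 2 by ring]; ring
  have hcont : Continuous U := continuous_iff_continuousAt.2 fun t => (hder t).continuousAt
  have hp0 : 0 ≤ p := by linarith
  have key : ∀ t : ℝ, 1/2 ≤ t → U tstar ≤ U t := by
    intro t ht
    rcases le_total tstar t with hle | hle
    · have hm : MonotoneOn U (Set.Ici tstar) := by
        apply monotoneOn_of_deriv_nonneg (convex_Ici _) hcont.continuousOn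
          (fun x _ => (hder x).differentiableAt.differentiableWithinAt)
        intro x hx
        rw [interior_Ici] at hx
        rw [(hder x).deriv]
        apply mul_nonneg hp0
        have hc := tpmD_cross (p - 1) tstar x hq0 hq1 htstar (le_of_lt hx)
        rw [← hhD] at hc
        have : (x - 1/2) ^ (p - 1) ≤ h * tpmD (p - 1) x :=
          le_of_mul_le_mul_right (by linarith) hD
        linarith
      exact hm (Set.mem_Ici.2 le_rfl) (Set.mem_Ici.2 hle) hle
    · have hm : AntitoneOn U (Set.Icc (1/2) tstar) := by
        apply antitoneOn_of_deriv_nonpos (convex_Icc _ _) hcont.continuousOn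
          (fun x _ => (hder x).differentiableAt.differentiableWithinAt)
        intro x hx
        rw [interior_Icc] at hx
        rw [(hder x).deriv]
        apply mul_nonpos_of_nonneg_of_nonpos hp0
        have hc := tpmD_cross (p - 1) x tstar hq0 hq1 hx.1 hx.2.le
        rw [← hhD] at hc
        have : h * tpmD (p - 1) x ≤ (x - 1/2) ^ (p - 1) :=
          le_of_mul_le_mul_right (by linarith) hD
        linarith
      exact hm ⟨ht, hle⟩ ⟨htstar.le, le_rfl⟩ hle
  intro t ht
  have hk := key t ht
  simp only [hU] at hk
  rw [abs_sub_comm 1 t, abs_sub_comm 1 tstar]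
  linarith
end

section
/- Let p ∈ (1,2) and ε ∈ (0,2]. Suppose δ ∈ [0,1] satisfies (1 − δ + ε/2)^p + |1 − δ − ε/2|^p = 2. If f, g ∈ L^p([0,1]) satisfy ‖f‖_p = ‖g‖_p = 1 and ‖f−g‖_p ≥ ε, then ‖(f+g)/2‖_p ≤ 1 − δ. -/
open MeasureTheory Set

namespace Hanner

noncomputable def sg (p x : ℝ) : ℝ := |x| ^ (p - 2) * x

lemma sg_pos {p x : ℝ} (hx : 0 < x) : sg p x = x ^ (p - 1) := by
  unfold sg
  rw [abs_of_pos hx, show p - 1 = (p - 2) + 1 by ring, Real.rpow_add_one hx.ne']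

lemma sg_zero {p : ℝ} : sg p 0 = 0 := by simp [sg]

lemma sg_neg (p x : ℝ) : sg p (-x) = - sg p x := by simp [sg]

lemma sg_nonneg {p x : ℝ} (hp : 1 < p) (hx : 0 ≤ x) : sg p x = x ^ (p - 1) := by
  rcases hx.eq_or_lt with h | h
  · rw [← h, sg_zero, Real.zero_rpow (by linarith)]
  · exact sg_pos h

lemma sg_mul (p : ℝ) {c : ℝ} (hc : 0 < c) (x : ℝ) : sg p (c * x) = c ^ (p - 1) * sg p x := by
  unfold sg
  rw [abs_mul, abs_of_pos hc, Real.mul_rpow hc.le (abs_nonneg x),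
    show p - 1 = (p - 2) + 1 by ring, Real.rpow_add_one hc.ne']
  ring

lemma neg_sg_le {p x : ℝ} (hp : 1 < p) : - sg p x ≤ |x| ^ (p - 1) := by
  rcases le_total 0 x with h | h
  · rw [sg_nonneg hp h, abs_of_nonneg h]
    have := Real.rpow_nonneg h (p - 1)
    linarith
  · rw [← sg_neg, sg_nonneg hp (by linarith), abs_of_nonpos h]

/-- concave majorization -/
lemma conc {q x y z w : ℝ} (hq0 : 0 ≤ q) (hq1 : q ≤ 1) (hx : 0 ≤ x) (hxy : x ≤ y) (hxz : x ≤ z)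
    (h : y + z = x + w) : x ^ q + w ^ q ≤ y ^ q + z ^ q := by
  have hc := Real.concaveOn_rpow hq0 hq1
  rcases (show x ≤ w by linarith).eq_or_lt with h1 | h1
  · have h2 : y = x := by linarith
    have h3 : z = x := by linarith
    rw [h2, h3, ← h1]
  · have hwx : 0 < w - x := by linarith
    have e1 := hc.2 (show x ∈ Ici (0:ℝ) from hx) (show w ∈ Ici (0:ℝ) from by simp; linarith)
      (show 0 ≤ (w - y) / (w - x) from div_nonneg (by linarith) hwx.le)
      (show 0 ≤ (y - x) / (w - x) from div_nonneg (by linarith) hwx.le)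
      (by field_simp; ring)
    have e2 := hc.2 (show x ∈ Ici (0:ℝ) from hx) (show w ∈ Ici (0:ℝ) from by simp; linarith)
      (show 0 ≤ (y - x) / (w - x) from div_nonneg (by linarith) hwx.le)
      (show 0 ≤ (w - y) / (w - x) from div_nonneg (by linarith) hwx.le)
      (by field_simp; ring)
    simp only [smul_eq_mul] at e1 e2
    rw [show (w - y) / (w - x) * x + (y - x) / (w - x) * w = y by field_simp; ring] at e1
    rw [show (y - x) / (w - x) * x + (w - y) / (w - x) * w = z by
      rw [show z = x + w - y by linarith]; field_simp; ring] at e2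
    have e3 : (w - y) / (w - x) + (y - x) / (w - x) = 1 := by field_simp; ring
    have e4 : x ^ q + w ^ q = ((w - y) / (w - x) + (y - x) / (w - x)) * (x ^ q + w ^ q) := by
      rw [e3, one_mul]
    rw [e4]
    nlinarith

noncomputable def B (p s : ℝ) : ℝ := sg p (s + 1) - sg p (s - 1)

lemma B_anti {p s t : ℝ} (hp1 : 1 < p) (hp2 : p < 2) (hs : 0 ≤ s) (hst : s ≤ t) :
    B p t ≤ B p s := by
  have k1 : ∀ s t : ℝ, 0 ≤ s → s ≤ t → t ≤ 1 → B p t ≤ B p s := by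
    intro s t hs hst ht
    unfold B
    rw [show t - 1 = -(1 - t) by ring, show s - 1 = -(1 - s) by ring, sg_neg, sg_neg,
      sg_nonneg hp1 (by linarith), sg_nonneg hp1 (by linarith), sg_nonneg hp1 (by linarith),
      sg_nonneg hp1 (by linarith)]
    have := conc (q := p - 1) (x := 1 - t) (y := 1 - s) (z := s + 1) (w := t + 1)
      (by linarith) (by linarith) (by linarith) (by linarith) (by linarith) (by ring)
    linarith
  have k2 : ∀ s t : ℝ, 1 ≤ s → s ≤ t → B p t ≤ B p s := by
    intro s t hs hst
    unfold B
    rw [sg_nonneg hp1 (by linarith), sg_nonneg hp1 (by linarith), sg_nonneg hp1 (by linarith),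
      sg_nonneg hp1 (by linarith)]
    have := conc (q := p - 1) (x := s - 1) (y := t - 1) (z := s + 1) (w := t + 1)
      (by linarith) (by linarith) (by linarith) (by linarith) (by linarith) (by ring)
    linarith
  rcases le_total t 1 with h | h
  · exact k1 s t hs hst h
  · rcases le_total s 1 with h' | h'
    · exact (k2 1 t le_rfl h).trans (k1 s 1 hs h' le_rfl)
    · exact k2 s t h' hst

lemma B_le_two {p s : ℝ} (hp1 : 1 < p) (hp2 : p < 2) (hs : 0 ≤ s) : B p s ≤ 2 := by
  have h := B_anti hp1 hp2 le_rfl hs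
  have : B p 0 = 2 := by
    unfold B
    rw [zero_add, zero_sub, sg_neg, sg_pos one_pos, Real.one_rpow]; norm_num
  linarith

noncomputable def H (p R : ℝ) : ℝ := |R + 1| ^ p + |R - 1| ^ p

lemma H_deriv {p R : ℝ} (hp1 : 1 < p) :
    HasDerivAt (H p) (p * (sg p (R + 1) + sg p (R - 1))) R := by
  have h1 := (hasDerivAt_abs_rpow (R + 1) hp1).comp_add_const R 1
  have h2 := (hasDerivAt_abs_rpow (R - 1) hp1).comp_sub_const R 1
  refine (h1.add h2).congr_deriv ?_
  unfold sg; ring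

lemma H_deriv_eq {p R : ℝ} (hR : 0 < R) :
    sg p (R + 1) + sg p (R - 1) = R ^ (p - 1) * B p R⁻¹ := by
  unfold B
  rw [mul_sub, ← sg_mul p hR, ← sg_mul p hR, mul_add, mul_sub, mul_inv_cancel₀ hR.ne', mul_one,
    show 1 - R = -(R - 1) by ring, sg_neg, add_comm 1 R]
  ring

lemma tangent {p r R : ℝ} (hp1 : 1 < p) (hp2 : p < 2) (hr : 0 < r) (hR : 0 ≤ R) :
    H p r - B p r⁻¹ * r ^ p + B p r⁻¹ * R ^ p ≤ H p R := by
  set b := B p r⁻¹ with hb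
  let G : ℝ → ℝ := fun x => H p x - b * x ^ p
  have hG : ∀ x, HasDerivAt G (p * (sg p (x + 1) + sg p (x - 1)) - b * (p * x ^ (p - 1))) x := by
    intro x
    exact (H_deriv hp1).sub ((Real.hasDerivAt_rpow_const (Or.inr hp1.le)).const_mul b)
  have hGd : ∀ x, 0 < x → deriv G x = p * x ^ (p - 1) * (B p x⁻¹ - b) := by
    intro x hx
    rw [(hG x).deriv, H_deriv_eq hx]; ring
  have hcont : Continuous G := continuous_iff_continuousAt.2 fun x => (hG x).continuousAt
  have hdiff : Differentiable ℝ G := fun x => (hG x).differentiableAt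
  have key : G r ≤ G R := by
    rcases le_total R r with h | h
    · have : AntitoneOn G (Icc 0 r) := by
        apply antitoneOn_of_deriv_nonpos (convex_Icc _ _) hcont.continuousOn hdiff.differentiableOn
        intro x hx
        rw [interior_Icc] at hx
        rw [hGd x hx.1]
        have h1 := B_anti hp1 hp2 (inv_nonneg.2 hr.le) (inv_anti₀ hx.1 hx.2.le)
        have h2 := Real.rpow_nonneg hx.1.le (p - 1)
        exact mul_nonpos_of_nonneg_of_nonpos (by positivity) (by linarith)
      exact this ⟨hR, h⟩ ⟨hr.le, le_rfl⟩ h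
    · have : MonotoneOn G (Ici r) := by
        apply monotoneOn_of_deriv_nonneg (convex_Ici _) hcont.continuousOn hdiff.differentiableOn
        intro x hx
        rw [interior_Ici] at hx
        have hx0 : 0 < x := lt_trans hr hx
        rw [hGd x hx0]
        have h1 := B_anti hp1 hp2 (inv_nonneg.2 hx0.le) (inv_anti₀ hr (le_of_lt hx))
        have h2 := Real.rpow_nonneg hx0.le (p - 1)
        exact mul_nonneg (by positivity) (by linarith)
      exact this (mem_Ici.2 le_rfl) h h
  simp only [G] at key
  linarith

noncomputable def phi (p x y : ℝ) : ℝ := |x + y| ^ p + |x - y| ^ p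

lemma phi_comm (p x y : ℝ) : phi p x y = phi p y x := by
  unfold phi; rw [add_comm x y, abs_sub_comm]

lemma phi_mul {p c : ℝ} (hc : 0 < c) (x : ℝ) : phi p c (c * x) = c ^ p * H p x := by
  unfold phi H
  rw [show c + c * x = c * (x + 1) by ring, show c - c * x = -(c * (x - 1)) by ring, abs_neg,
    abs_mul, abs_mul, abs_of_pos hc, Real.mul_rpow hc.le (abs_nonneg _),
    Real.mul_rpow hc.le (abs_nonneg _)]
  ring

lemma phi_strict {p a x y : ℝ} (hp1 : 1 < p) (ha : 0 ≤ a) (hax : a < x) (hy : 0 ≤ y) :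
    phi p a y < phi p x y := by
  have hd : ∀ x, HasDerivAt (fun x => phi p x y) (p * (sg p (x + y) + sg p (x - y))) x := by
    intro x
    have h1 := (hasDerivAt_abs_rpow (x + y) hp1).comp_add_const x y
    have h2 := (hasDerivAt_abs_rpow (x - y) hp1).comp_sub_const x y
    refine (h1.add h2).congr_deriv ?_
    unfold sg; ring
  have : StrictMonoOn (fun x => phi p x y) (Ici 0) := by
    apply strictMonoOn_of_deriv_pos (convex_Ici _)
      (continuous_iff_continuousAt.2 fun x => (hd x).continuousAt).continuousOn
    intro x hx
    rw [interior_Ici] at hx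
    have hx0 : 0 < x := hx
    rw [(hd x).deriv]
    rcases hy.eq_or_lt with h | h
    · rw [← h, add_zero, sub_zero, sg_pos hx0]
      have := Real.rpow_pos_of_pos hx0 (p - 1)
      positivity
    · have h1 := neg_sg_le (x := x - y) hp1
      have h2 : |x - y| ^ (p - 1) < (x + y) ^ (p - 1) := by
        apply Real.rpow_lt_rpow (abs_nonneg _) _ (by linarith)
        rw [abs_lt]; constructor <;> linarith
      rw [sg_pos (show 0 < x + y by linarith)]
      exact mul_pos (by linarith) (by linarith)
  exact this ha (ha.trans hax.le) hax

lemma phi_mono {p a x y : ℝ} (hp1 : 1 < p) (ha : 0 ≤ a) (hax : a ≤ x) (hy : 0 ≤ y) :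
    phi p a y ≤ phi p x y := by
  rcases hax.eq_or_lt with h | h
  · rw [h]
  · exact (phi_strict hp1 ha h hy).le

lemma pointwise {p r a b : ℝ} (hp1 : 1 < p) (hp2 : p < 2) (hr : 0 < r) (ha : 0 ≤ a) (hb : 0 ≤ b) :
    (H p r - B p r⁻¹ * r ^ p) * a ^ p + B p r⁻¹ * b ^ p ≤ phi p a b := by
  rcases ha.eq_or_lt with h | h
  · rw [← h, Real.zero_rpow (by linarith)]
    unfold phi
    rw [zero_add, zero_sub, abs_neg, abs_of_nonneg hb]
    have h1 := B_le_two hp1 hp2 (inv_nonneg.2 hr.le)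
    have h2 := Real.rpow_nonneg hb p
    nlinarith
  · have h1 := tangent hp1 hp2 hr (div_nonneg hb ha)
    have h2 : b = a * (b / a) := by field_simp
    have h4 : b ^ p = a ^ p * (b / a) ^ p := by
      rw [← Real.mul_rpow ha (div_nonneg hb ha), ← h2]
    have h3 : phi p a b = a ^ p * H p (b / a) := by
      rw [← phi_mul h, ← h2]
    rw [h3, h4]
    have := mul_le_mul_of_nonneg_left h1 (Real.rpow_nonneg ha p)
    linarith

lemma phi_half (p f g : ℝ) : phi p |(f + g) / 2| |(f - g) / 2| = |f| ^ p + |g| ^ p := by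
  have e1 : (f + g) / 2 + (f - g) / 2 = f := by ring
  have e2 : (f + g) / 2 - (f - g) / 2 = g := by ring
  unfold phi
  rcases abs_choice ((f + g) / 2) with h | h <;> rcases abs_choice ((f - g) / 2) with h' | h' <;>
    rw [h, h']
  · rw [e1, e2]
  · rw [← sub_eq_add_neg, sub_neg_eq_add, e1, e2, add_comm]
  · rw [show -((f + g) / 2) + (f - g) / 2 = -g by ring,
      show -((f + g) / 2) - (f - g) / 2 = -f by ring, abs_neg, abs_neg, add_comm]
  · rw [show -((f + g) / 2) + -((f - g) / 2) = -f by ring,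
      show -((f + g) / 2) - -((f - g) / 2) = -g by ring, abs_neg, abs_neg]

lemma dom {p a b : ℝ} (hp1 : 1 < p) (ha : 0 ≤ a) (hb : 0 ≤ b) : a ^ p ≤ phi p a b := by
  have h := phi_mono (y := a) hp1 le_rfl hb ha
  rw [phi_comm p b a] at h
  have : phi p 0 a = 2 * a ^ p := by
    unfold phi
    rw [zero_add, zero_sub, abs_neg, abs_of_nonneg ha]; ring
  have := Real.rpow_nonneg ha p
  linarith

end Hanner

open Hanner

/-- Uniform convexity of `L^p([0,1])` for `1 < p < 2`: if `δ ∈ [0,1]` solves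
`(1 − δ + ε/2)^p + |1 − δ − ε/2|^p = 2`, and `‖f‖_p = ‖g‖_p = 1` with `‖f−g‖_p ≥ ε`,
then `‖(f+g)/2‖_p ≤ 1 − δ`. Here `‖h‖_p = (∫₀¹ |h|^p)^{1/p}`. -/
theorem uniform_convexity_lt_two (p ε δ : ℝ) (hp1 : 1 < p) (hp2 : p < 2)
    (hε0 : 0 < ε) (hε2 : ε ≤ 2) (hδ0 : 0 ≤ δ) (hδ1 : δ ≤ 1)
    (hδ : (1 - δ + ε/2) ^ p + |1 - δ - ε/2| ^ p = 2)
    (f g : ℝ → ℝ) (hfm : Measurable f) (hgm : Measurable g)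
    (hfi : IntegrableOn (fun t => |f t| ^ p) (Icc 0 1))
    (hgi : IntegrableOn (fun t => |g t| ^ p) (Icc 0 1))
    (hf : (∫ t in Icc (0:ℝ) 1, |f t| ^ p) ^ (1/p) = 1)
    (hg : (∫ t in Icc (0:ℝ) 1, |g t| ^ p) ^ (1/p) = 1)
    (hfg : ε ≤ (∫ t in Icc (0:ℝ) 1, |f t - g t| ^ p) ^ (1/p)) :
    (∫ t in Icc (0:ℝ) 1, |(f t + g t) / 2| ^ p) ^ (1/p) ≤ 1 - δ := by
  have hp0 : 0 < p := by linarith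
  have nn : ∀ h : ℝ → ℝ, 0 ≤ ∫ t in Icc (0:ℝ) 1, |h t| ^ p := fun h =>
    integral_nonneg fun t => Real.rpow_nonneg (abs_nonneg _) p
  have root : ∀ x : ℝ, 0 ≤ x → (x ^ (1/p)) ^ p = x := by
    intro x hx
    rw [← Real.rpow_mul hx, one_div, inv_mul_cancel₀ hp0.ne', Real.rpow_one]
  have hf1 : ∫ t in Icc (0:ℝ) 1, |f t| ^ p = 1 := by
    rw [← root _ (nn f), hf, Real.one_rpow]
  have hg1 : ∫ t in Icc (0:ℝ) 1, |g t| ^ p = 1 := by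
    rw [← root _ (nn g), hg, Real.one_rpow]
  have hui : IntegrableOn (fun t => |(f t + g t) / 2| ^ p) (Icc 0 1) := by
    refine Integrable.mono' (hfi.add hgi) (Measurable.aestronglyMeasurable (by fun_prop)) (Filter.Eventually.of_forall fun t => ?_)
    rw [Real.norm_of_nonneg (Real.rpow_nonneg (abs_nonneg _) p)]
    simp only [Pi.add_apply]
    rw [← phi_half]
    exact dom hp1 (abs_nonneg _) (abs_nonneg _)
  have hvi : IntegrableOn (fun t => |(f t - g t) / 2| ^ p) (Icc 0 1) := by
    refine Integrable.mono' (hfi.add hgi) (Measurable.aestronglyMeasurable (by fun_prop)) (Filter.Eventually.of_forall fun t => ?_)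
    rw [Real.norm_of_nonneg (Real.rpow_nonneg (abs_nonneg _) p)]
    simp only [Pi.add_apply]
    rw [← phi_half, phi_comm]
    exact dom hp1 (abs_nonneg _) (abs_nonneg _)
  set U := ∫ t in Icc (0:ℝ) 1, |(f t + g t) / 2| ^ p with hU
  set V := ∫ t in Icc (0:ℝ) 1, |(f t - g t) / 2| ^ p with hV
  have hU0 : 0 ≤ U := nn fun t => (f t + g t) / 2
  have hV0 : 0 ≤ V := nn fun t => (f t - g t) / 2
  set A := U ^ (1/p) with hA
  set C := V ^ (1/p) with hC
  have hA0 : 0 ≤ A := Real.rpow_nonneg hU0 _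
  have hVeq : ∫ t in Icc (0:ℝ) 1, |f t - g t| ^ p = 2 ^ p * V := by
    rw [hV, ← integral_const_mul]
    congr 1
    funext t
    rw [← Real.mul_rpow (by norm_num) (abs_nonneg _), abs_div, abs_two]
    congr 1
    ring
  have hCε : ε / 2 ≤ C := by
    rw [hVeq, Real.mul_rpow (by positivity) hV0, ← Real.rpow_mul (by norm_num),
      mul_one_div_cancel hp0.ne', Real.rpow_one] at hfg
    linarith
  by_contra hcon
  push Not at hcon
  have hApos : 0 < A := by linarith
  have hCpos : 0 < C := by linarith
  have hr : 0 < C / A := by positivity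
  have hmain : (H p (C / A) - B p (C / A)⁻¹ * (C / A) ^ p) * U + B p (C / A)⁻¹ * V ≤ 2 := by
    rw [hU, hV, ← integral_const_mul, ← integral_const_mul,
      ← integral_add (hui.const_mul _) (hvi.const_mul _)]
    have h2 : (2:ℝ) = ∫ t in Icc (0:ℝ) 1, (|f t| ^ p + |g t| ^ p) := by
      rw [integral_add hfi hgi, hf1, hg1]; norm_num
    refine le_of_le_of_eq ?_ h2.symm
    refine integral_mono ((hui.const_mul _).add (hvi.const_mul _)) (hfi.add hgi) fun t => ?_
    have := pointwise hp1 hp2 hr (abs_nonneg ((f t + g t) / 2)) (abs_nonneg ((f t - g t) / 2))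
    rw [phi_half] at this
    exact this
  have hUA : U = A ^ p := (root U hU0).symm
  have hVC : V = A ^ p * (C / A) ^ p := by
    rw [← Real.mul_rpow hA0 hr.le, mul_div_cancel₀ _ hApos.ne']
    exact (root V hV0).symm
  have hphi : phi p A C ≤ 2 := by
    have h1 : phi p A C = A ^ p * H p (C / A) := by
      rw [← phi_mul hApos, mul_div_cancel₀ _ hApos.ne']
    rw [h1]
    rw [hVC, hUA] at hmain
    linarith
  have h1 : phi p (1 - δ) (ε / 2) < phi p A (ε / 2) :=
    phi_strict hp1 (by linarith) hcon (by linarith)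
  have h2 : phi p A (ε / 2) ≤ phi p A C := by
    rw [phi_comm p A, phi_comm p A]
    exact phi_mono hp1 (by linarith) hCε hA0
  have h3 : phi p (1 - δ) (ε / 2) = 2 := by
    unfold phi
    rw [abs_of_nonneg (show 0 ≤ 1 - δ + ε / 2 by linarith)]
    exact hδ
  linarith
end

section
/- Let p ∈ (1,2) and ε ∈ (0,2]. Then there exists a unique t* ∈ [1/2, ∞) with t*^p + |1−t*|^p = 2ε^{−p}, and the number δ = 1 − ε(t* − 1/2) lies in [0,1] and is the unique solution in [0,1] of the equation (1 − δ + ε/2)^p + |1 − δ − ε/2|^p = 2. -/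
theorem aux_lt (p h u v : ℝ) (hp1 : 1 < p) (hh : 0 < h) (hu : 0 ≤ u) (huv : u < v) :
    (u + h) ^ p + |u - h| ^ p < (v + h) ^ p + |v - h| ^ p := by
  have hv : 0 < v := by linarith
  have hc := (strictConvexOn_rpow hp1).2
  obtain ⟨a, b, ha, hb, hab, hs⟩ : ∃ a b : ℝ, 0 < a ∧ 0 < b ∧ a + b = 1 ∧ u = a * v - b * v := by
    refine ⟨(u + v) / (2 * v), (v - u) / (2 * v), by positivity,
      div_pos (by linarith) (by positivity), ?_, ?_⟩
    · field_simp; ring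
    · field_simp; ring
  have hne : v + h ≠ |v - h| := by
    intro e
    rcases abs_cases (v - h) with h1 | h1 <;> linarith
  have hA : (0:ℝ) ≤ v + h := by linarith
  have hB : 0 ≤ |v - h| := abs_nonneg _
  have h1 := hc (x := v + h) (y := |v - h|) hA hB hne ha hb hab
  have h2 := hc (x := |v - h|) (y := v + h) hB hA hne.symm ha hb hab
  simp only [smul_eq_mul] at h1 h2
  have e1 : u + h ≤ a * (v + h) + b * |v - h| := by
    have : b * (h - v) ≤ b * |v - h| :=
      mul_le_mul_of_nonneg_left (by have := neg_abs_le (v - h); linarith) hb.le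
    have : h = a * h + b * h := by rw [← add_mul, hab, one_mul]
    linarith
  have e2 : |u - h| ≤ a * |v - h| + b * (v + h) := by
    have h3 : h = a * h + b * h := by rw [← add_mul, hab, one_mul]
    have h4 : a * (v - h) ≤ a * |v - h| := mul_le_mul_of_nonneg_left (le_abs_self _) ha.le
    have h5 : a * (h - v) ≤ a * |v - h| :=
      mul_le_mul_of_nonneg_left (by have := neg_abs_le (v - h); linarith) ha.le
    have h6 : 0 < b * (v + h) := by positivity
    have h7 : 0 < b * v := by positivity
    have h8 : 0 < b * h := by positivity
    rw [abs_le]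
    constructor <;> linarith
  have f1 := Real.rpow_le_rpow (by linarith) e1 (by linarith : 0 ≤ p)
  have f2 := Real.rpow_le_rpow (abs_nonneg _) e2 (by linarith : 0 ≤ p)
  have : (a * (v + h) ^ p + b * |v - h| ^ p) + (a * |v - h| ^ p + b * (v + h) ^ p)
      = (a + b) * ((v + h) ^ p + |v - h| ^ p) := by ring
  rw [hab, one_mul] at this
  linarith

theorem aux_inj (p h u v : ℝ) (hp1 : 1 < p) (hh : 0 < h) (hu : 0 ≤ u) (hv : 0 ≤ v)
    (e : (u + h) ^ p + |u - h| ^ p = (v + h) ^ p + |v - h| ^ p) : u = v := by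
  rcases lt_trichotomy u v with h1 | h1 | h1
  · exact absurd e (aux_lt p h u v hp1 hh hu h1).ne
  · exact h1
  · exact absurd e (aux_lt p h v u hp1 hh hv h1).ne'

theorem aux_scale (p ε t : ℝ) (hε : 0 < ε) (ht : 1/2 ≤ t) :
    t ^ p + |1 - t| ^ p = 2 * ε ^ (-p) ↔
      (ε * (t - 1/2) + ε/2) ^ p + |ε * (t - 1/2) - ε/2| ^ p = 2 := by
  have e1 : ε * (t - 1/2) + ε/2 = ε * t := by ring
  have e2 : |ε * (t - 1/2) - ε/2| = ε * |1 - t| := by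
    rw [show ε * (t - 1/2) - ε/2 = ε * (t - 1) by ring, abs_mul, abs_of_pos hε, abs_sub_comm]
  rw [e1, e2, Real.mul_rpow hε.le (by linarith), Real.mul_rpow hε.le (abs_nonneg _),
    Real.rpow_neg hε.le]
  have : 0 < ε ^ p := Real.rpow_pos_of_pos hε p
  rw [← mul_add, ← div_eq_mul_inv, eq_div_iff this.ne', mul_comm]

theorem aux_exists (p h : ℝ) (hp1 : 1 < p) (hh : 0 < h) (hh1 : h ≤ 1) :
    ∃ u : ℝ, 0 ≤ u ∧ u ≤ 1 ∧ (u + h) ^ p + |u - h| ^ p = 2 := by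
  have hcont : Continuous (fun u : ℝ => (u + h) ^ p + |u - h| ^ p) :=
    ((continuous_id.add continuous_const).rpow_const (fun _ => Or.inr (by linarith))).add
      ((continuous_id.sub continuous_const).abs.rpow_const (fun _ => Or.inr (by linarith)))
  have h0 : ((0:ℝ) + h) ^ p + |0 - h| ^ p ≤ 2 := by
    have : h ^ p ≤ 1 := Real.rpow_le_one hh.le hh1 (by linarith)
    rw [zero_add, zero_sub, abs_neg, abs_of_pos hh]
    linarith
  have h1 : 2 ≤ ((1:ℝ) + h) ^ p + |1 - h| ^ p := by
    rw [abs_of_nonneg (by linarith : 0 ≤ 1 - h)]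
    have a1 := one_add_mul_self_le_rpow_one_add (s := h) (by linarith) hp1.le
    have a2 := one_add_mul_self_le_rpow_one_add (s := -h) (by linarith) hp1.le
    rw [← sub_eq_add_neg] at a2
    linarith
  obtain ⟨u, ⟨hu0, hu1⟩, hu⟩ :=
    intermediate_value_Icc (zero_le_one' ℝ) hcont.continuousOn ⟨h0, h1⟩
  exact ⟨u, hu0, hu1, hu⟩



/-- For `1 < p < 2` and `ε ∈ (0,2]`, there is a unique `t* ∈ [1/2,∞)` with
`t*^p + |1−t*|^p = 2ε^{−p}`, and `δ = 1 − ε(t*−1/2)` lies in `[0,1]` and is the unique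
solution in `[0,1]` of `(1 − δ + ε/2)^p + |1 − δ − ε/2|^p = 2`. -/
theorem parametric_vs_implicit_modulus (p ε : ℝ) (hp1 : 1 < p) (hp2 : p < 2)
    (hε0 : 0 < ε) (hε2 : ε ≤ 2) :
    ∃ tstar : ℝ, (1/2 ≤ tstar ∧ tstar ^ p + |1 - tstar| ^ p = 2 * ε ^ (-p)) ∧
      (∀ t : ℝ, 1/2 ≤ t → t ^ p + |1 - t| ^ p = 2 * ε ^ (-p) → t = tstar) ∧
      (0 ≤ 1 - ε * (tstar - 1/2) ∧ 1 - ε * (tstar - 1/2) ≤ 1) ∧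
      ((1 - (1 - ε * (tstar - 1/2)) + ε/2) ^ p
          + |1 - (1 - ε * (tstar - 1/2)) - ε/2| ^ p = 2) ∧
      (∀ δ : ℝ, 0 ≤ δ → δ ≤ 1 →
        (1 - δ + ε/2) ^ p + |1 - δ - ε/2| ^ p = 2 → δ = 1 - ε * (tstar - 1/2)) := by
  obtain ⟨u, hu0, hu1, hu⟩ := aux_exists p (ε/2) hp1 (by linarith) (by linarith)
  have hε2' : 0 < ε / 2 := by linarith
  have hk : ε * ((u / ε + 1/2) - 1/2) = u := by field_simp; ring
  have ht : 1/2 ≤ u / ε + 1/2 := by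
    have : 0 ≤ u / ε := by positivity
    linarith
  refine ⟨u / ε + 1/2, ⟨ht, ?_⟩, ?_, ?_, ?_, ?_⟩
  · rw [aux_scale p ε _ hε0 ht, hk]; exact hu
  · intro t ht' e
    rw [aux_scale p ε _ hε0 ht'] at e
    have := aux_inj p (ε/2) _ u hp1 hε2' (mul_nonneg hε0.le (by linarith)) hu0 (e.trans hu.symm)
    rw [← this]; field_simp; ring
  · rw [hk]; constructor <;> linarith
  · rw [hk, sub_sub_cancel]; exact hu
  · intro δ h0 h1 e
    have := aux_inj p (ε/2) _ u hp1 hε2' (by linarith : 0 ≤ 1 - δ) hu0 (e.trans hu.symm)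
    rw [hk]; linarith
end
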